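/- arXiv:1105.1084 — 2 statements merged into one kernel-verified Lean document; each statement's English description precedes it below -/
import Mathlib

section
/- Let n ≥ 1, let Λ ⊆ ℝⁿ be a Borel set of positive Lebesgue measure, let ξ: Λ → ℓ²(ℕ) be a weakly measurable map with ‖ξ(p)‖ = 1 for almost every p ∈ Λ, and let M be the U_Λ-covariant POVM on (ℝⁿ, ℬ(ℝⁿ)) acting on L²(Λ) determined by ⟨φ, M(B)ψ⟩ = (2π)^{−n} ∫_B ∫_Λ ∫_Λ e^{i(x|p₁−p₂)} ⟨ξ(p₁), ξ(p₂)⟩ conj(φ(p₁)) ψ(p₂) dp₁ dp₂ dx for all φ, ψ ∈ (L¹ ∩ L²)(Λ). Let 𝐇 ⊆ ℓ²(ℕ) be the closed linear span of the vectors ∫_Λ φ(p) ξ(p) dp, φ ∈ (L¹ ∩ L²)(Λ). Then M is an extreme point of the convex set of all U_Λ-covariant POVMs on (ℝⁿ, ℬ(ℝⁿ)) acting on L²(Λ) if and only if the only bounded operator A on 𝐇 satisfying ⟨ξ(p), A ξ(p)⟩ = 0 for almost every p ∈ Λ is A = 0. -/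
open MeasureTheory Set
open scoped ComplexConjugate

local notation "⟪" x ", " y "⟫" => @inner ℂ _ _ x y

/-- A normalized positive operator valued measure (POVM). -/
structure POVM (Ω : Type*) [MeasurableSpace Ω] (H : Type*) [NormedAddCommGroup H]
    [InnerProductSpace ℂ H] [CompleteSpace H] where
  toFun : Set Ω → (H →L[ℂ] H)
  isPositive : ∀ B : Set Ω, MeasurableSet B → (toFun B).IsPositive
  normalized : toFun Set.univ = 1
  m_iUnion : ∀ B : ℕ → Set Ω, (∀ k, MeasurableSet (B k)) →
    Pairwise (Function.onFun Disjoint B) → ∀ φ ψ : H,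
      HasSum (fun k => ⟪φ, toFun (B k) ψ⟫) ⟪φ, toFun (⋃ k, B k) ψ⟫

/-- `ℓ²(ℕ)`. -/
noncomputable abbrev ell2 : Type := lp (fun _ : ℕ => ℂ) 2

/-- Covariance of a POVM `M` on `ℝⁿ` acting on `L²(Λ)` under a family of unitaries `U`:
`U(q) M(B) U(q)* = M(B + q)`. -/
def IsCovariantPos (n : ℕ) (Λ : Set (Fin n → ℝ))
    (U : (Fin n → ℝ) →
      (Lp ℂ 2 (volume.restrict Λ) ≃ₗᵢ[ℂ] Lp ℂ 2 (volume.restrict Λ)))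
    (M : POVM (Fin n → ℝ) (Lp ℂ 2 (volume.restrict Λ))) : Prop :=
  ∀ q : Fin n → ℝ, ∀ B : Set (Fin n → ℝ), MeasurableSet B →
    ∀ φ ψ : Lp ℂ 2 (volume.restrict Λ),
      ⟪(U q φ : Lp ℂ 2 (volume.restrict Λ)),
          M.toFun ((fun x => x + q) '' B) (U q ψ)⟫ = ⟪φ, M.toFun B ψ⟫

/-- The matrix elements of `M` on `(L¹ ∩ L²)(Λ)` are given by the kernel determined by `ξ`. -/
def MatrixFormula (n : ℕ) (Λ : Set (Fin n → ℝ)) (ξ : (Fin n → ℝ) → ell2)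
    (M : POVM (Fin n → ℝ) (Lp ℂ 2 (volume.restrict Λ))) : Prop :=
  ∀ φ ψ : (Fin n → ℝ) → ℂ,
    Integrable φ (volume.restrict Λ) → Integrable ψ (volume.restrict Λ) →
    ∀ (hφ : MemLp φ 2 (volume.restrict Λ)) (hψ : MemLp ψ 2 (volume.restrict Λ)),
    ∀ B : Set (Fin n → ℝ), MeasurableSet B →
      ⟪hφ.toLp φ, M.toFun B (hψ.toLp ψ)⟫
        = (((2 * Real.pi) ^ n : ℝ) : ℂ)⁻¹ *
          ∫ x in B, (∫ p₁, (∫ p₂,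
              Complex.exp (Complex.I * (∑ k, x k * (p₁ k - p₂ k))) *
                ⟪ξ p₁, ξ p₂⟫ * conj (φ p₁) * ψ p₂
              ∂(volume.restrict Λ)) ∂(volume.restrict Λ))

/-- `M` is an extreme point of the convex set of `U`-covariant POVMs. -/
def IsExtremeCovariantPos (n : ℕ) (Λ : Set (Fin n → ℝ))
    (U : (Fin n → ℝ) →
      (Lp ℂ 2 (volume.restrict Λ) ≃ₗᵢ[ℂ] Lp ℂ 2 (volume.restrict Λ)))
    (M : POVM (Fin n → ℝ) (Lp ℂ 2 (volume.restrict Λ))) : Prop :=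
  ∀ M₁ M₂ : POVM (Fin n → ℝ) (Lp ℂ 2 (volume.restrict Λ)),
    IsCovariantPos n Λ U M₁ → IsCovariantPos n Λ U M₂ →
    ∀ t : ℝ, 0 < t → t < 1 →
    (∀ B : Set (Fin n → ℝ), MeasurableSet B →
      M.toFun B = (t : ℂ) • M₁.toFun B + ((1 - t : ℝ) : ℂ) • M₂.toFun B) →
    ∀ B : Set (Fin n → ℝ), MeasurableSet B →
      M₁.toFun B = M.toFun B ∧ M₂.toFun B = M.toFun B

/-- The closed subspace `𝐇 ⊆ ℓ²(ℕ)` generated by the vectors `∫_Λ φ(p) ξ(p) dp`,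
`φ ∈ (L¹ ∩ L²)(Λ)`. -/
noncomputable def genSubspace (n : ℕ) (Λ : Set (Fin n → ℝ))
    (ξ : (Fin n → ℝ) → ell2) : Submodule ℂ ell2 :=
  (Submodule.span ℂ {v : ell2 | ∃ φ : (Fin n → ℝ) → ℂ,
    Integrable φ (volume.restrict Λ) ∧ MemLp φ 2 (volume.restrict Λ) ∧
      v = ∫ p, φ p • ξ p ∂(volume.restrict Λ)}).topologicalClosure

open scoped FourierTransform ContDiff

theorem aux_fourier_L2 {V F : Type*} [NormedAddCommGroup V] [InnerProductSpace ℝ V]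
    [FiniteDimensional ℝ V] [MeasurableSpace V] [BorelSpace V]
    [NormedAddCommGroup F] [InnerProductSpace ℂ F] [CompleteSpace F]
    (g : V → F) (hg : Integrable g) (hg2 : MemLp g 2) :
    ((𝓕 (hg2.toLp g) : Lp F 2 (volume : Measure V)) : V → F) =ᵐ[volume] 𝓕 g := by
  have hcont : Continuous (𝓕 g) := by
    exact VectorFourier.fourierIntegral_continuous Real.continuous_fourierChar continuous_inner hg
  apply ae_eq_of_integral_contDiff_smul_eq
  · exact (Lp.memLp _).locallyIntegrable (by norm_num)
  · exact hcont.locallyIntegrable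
  · intro f f_smooth f_cpt
    have hg₁ : HasCompactSupport (Complex.ofRealCLM ∘ f) := f_cpt.comp_left rfl
    have hg₂ : ContDiff ℝ ∞ (Complex.ofRealCLM ∘ f) := by fun_prop
    have h1 := congrArg (fun T => T (hg₁.toSchwartzMap hg₂))
      (MeasureTheory.Lp.fourier_toTemperedDistribution_eq (hg2.toLp g))
    simp only [TemperedDistribution.fourier_apply, Lp.toTemperedDistribution_apply] at h1
    have h2 : ∫ x, (𝓕 (hg₁.toSchwartzMap hg₂)) x • (hg2.toLp g) x
        = ∫ x, (𝓕 (hg₁.toSchwartzMap hg₂)) x • g x := by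
      apply integral_congr_ae
      filter_upwards [hg2.coeFn_toLp] with x hx
      rw [hx]
    rw [h2] at h1
    have h3 := VectorFourier.integral_fourierIntegral_smul_eq_flip
      (L := innerₗ V) (μ := volume) (ν := volume) (e := Real.fourierChar)
      (f := (hg₁.toSchwartzMap hg₂)) (g := g) Real.continuous_fourierChar continuous_inner
      (SchwartzMap.integrable _) hg
    rw [flip_innerₗ] at h3
    have h4 : ∀ x, (hg₁.toSchwartzMap hg₂) x = ((f x : ℝ) : ℂ) := fun x => by simp
    simp only [h4] at h1
    rw [SchwartzMap.fourier_coe] at h1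
    have h5 : ∀ x, (f x) • 𝓕 g x = (hg₁.toSchwartzMap hg₂) x • 𝓕 g x := by
      intro x; rw [h4]; simp
    simp only [h5]
    erw [← h3]
    rw [show VectorFourier.fourierIntegral Real.fourierChar volume (innerₗ V) (hg₁.toSchwartzMap hg₂) = 𝓕 (hg₁.toSchwartzMap hg₂ : V → ℂ) from rfl, h1]
    simp

theorem aux_plancherel_V {V F : Type*} [NormedAddCommGroup V] [InnerProductSpace ℝ V]
    [FiniteDimensional ℝ V] [MeasurableSpace V] [BorelSpace V]
    [NormedAddCommGroup F] [InnerProductSpace ℂ F] [CompleteSpace F]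
    (g h : V → F) (hg : Integrable g) (hg2 : MemLp g 2) (hh : Integrable h) (hh2 : MemLp h 2) :
    MemLp (𝓕 g) 2 ∧ ∫ x, ⟪𝓕 g x, 𝓕 h x⟫ = ∫ x, ⟪g x, h x⟫ := by
  constructor
  · exact (memLp_congr_ae (aux_fourier_L2 g hg hg2)).1 (Lp.memLp _)
  · have := Lp.inner_fourier_eq (hg2.toLp g) (hh2.toLp h)
    rw [L2.inner_def, L2.inner_def] at this
    convert! this using 1
    · apply integral_congr_ae
      filter_upwards [aux_fourier_L2 g hg hg2, aux_fourier_L2 h hh hh2] with x h1 h2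
      rw [h1, h2]
    · apply integral_congr_ae
      filter_upwards [hg2.coeFn_toLp, hh2.coeFn_toLp] with x h1 h2
      rw [h1, h2]

/-- Fourier integral. -/
noncomputable def FT {n : ℕ} {F : Type*} [NormedAddCommGroup F] [NormedSpace ℂ F]
    (μ : Measure (Fin n → ℝ)) (g : (Fin n → ℝ) → F) (x : Fin n → ℝ) : F :=
  ∫ p, Complex.exp (-(Complex.I * (∑ k, x k * p k))) • g p ∂μ

theorem aux_FT_eq {n : ℕ} {F : Type*} [NormedAddCommGroup F] [InnerProductSpace ℂ F]
    [CompleteSpace F] (g : (Fin n → ℝ) → F) (x : Fin n → ℝ) :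
    FT volume g x = 𝓕 (fun v : EuclideanSpace ℝ (Fin n) => g (WithLp.ofLp v))
      ((2 * Real.pi)⁻¹ • (WithLp.toLp 2 x : EuclideanSpace ℝ (Fin n))) := by
  rw [Real.fourier_eq', FT]
  rw [← (PiLp.volume_preserving_ofLp (Fin n)).integral_comp
    (MeasurableEquiv.toLp 2 (Fin n → ℝ)).symm.measurableEmbedding]
  congr 1
  ext1 v
  congr 2
  simp [PiLp.inner_apply, Finset.mul_sum, Finset.sum_mul]
  apply Finset.sum_congr rfl
  intro k _
  have : (Real.pi : ℂ) ≠ 0 := by exact_mod_cast Real.pi_ne_zero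
  field_simp

theorem aux_plancherel {n : ℕ} {F : Type*} [NormedAddCommGroup F] [InnerProductSpace ℂ F]
    [CompleteSpace F]
    (g h : (Fin n → ℝ) → F) (hg : Integrable g) (hg2 : MemLp g 2)
    (hh : Integrable h) (hh2 : MemLp h 2) :
    MemLp (FT volume g) 2 ∧ ∫ x, ⟪FT volume g x, FT volume h x⟫
      = (((2 * Real.pi) ^ n : ℝ) : ℂ) * ∫ x, ⟪g x, h x⟫ := by
  have hmp := PiLp.volume_preserving_ofLp (Fin n)
  have hmp' := PiLp.volume_preserving_toLp (Fin n)
  have hme := (MeasurableEquiv.toLp 2 (Fin n → ℝ)).symm.measurableEmbedding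
  have hme' := (MeasurableEquiv.toLp 2 (Fin n → ℝ)).measurableEmbedding
  have hpi : (2 * Real.pi)⁻¹ ≠ 0 := by positivity
  obtain ⟨h1, h2⟩ := aux_plancherel_V (fun v : EuclideanSpace ℝ (Fin n) => g (WithLp.ofLp v))
    (fun v : EuclideanSpace ℝ (Fin n) => h (WithLp.ofLp v))
    (hmp.integrable_comp_of_integrable hg) (hg2.comp_measurePreserving hmp)
    (hmp.integrable_comp_of_integrable hh) (hh2.comp_measurePreserving hmp)
  have e1 : FT volume g = fun x => 𝓕 (fun v : EuclideanSpace ℝ (Fin n) => g (WithLp.ofLp v))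
      (WithLp.toLp 2 ((2 * Real.pi)⁻¹ • x)) := by
    ext1 x; rw [aux_FT_eq]; rfl
  have e2 : FT volume h = fun x => 𝓕 (fun v : EuclideanSpace ℝ (Fin n) => h (WithLp.ofLp v))
      (WithLp.toLp 2 ((2 * Real.pi)⁻¹ • x)) := by
    ext1 x; rw [aux_FT_eq]; rfl
  constructor
  · have h3 := h1.comp_measurePreserving hmp'
    rw [e1]
    have hc : Continuous (𝓕 (fun v : EuclideanSpace ℝ (Fin n) => g (WithLp.ofLp v))) :=
      VectorFourier.fourierIntegral_continuous Real.continuous_fourierChar continuous_inner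
        (hmp.integrable_comp_of_integrable hg)
    have hc' : Continuous (fun x : Fin n → ℝ => 𝓕 (fun v : EuclideanSpace ℝ (Fin n) => g (WithLp.ofLp v))
      (WithLp.toLp 2 ((2 * Real.pi)⁻¹ • x))) := hc.comp (by fun_prop)
    rw [memLp_two_iff_integrable_sq_norm h3.1] at h3
    rw [memLp_two_iff_integrable_sq_norm hc'.aestronglyMeasurable]
    exact h3.comp_smul hpi
  · rw [e1, e2]
    have := Measure.integral_comp_smul (volume : Measure (Fin n → ℝ)) (fun x => ⟪𝓕 (fun v : EuclideanSpace ℝ (Fin n) => g (WithLp.ofLp v))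
      (WithLp.toLp 2 x), 𝓕 (fun v : EuclideanSpace ℝ (Fin n) => h (WithLp.ofLp v))
      (WithLp.toLp 2 x)⟫) (2 * Real.pi)⁻¹
    rw [this]
    have h4 := hmp'.integral_comp hme' (fun v => ⟪𝓕 (fun v : EuclideanSpace ℝ (Fin n) => g (WithLp.ofLp v)) v, 𝓕 (fun v : EuclideanSpace ℝ (Fin n) => h (WithLp.ofLp v)) v⟫)
    have h5 := hmp.integral_comp hme (fun x => ⟪g x, h x⟫)
    rw [h4, h2, h5]
    have h6 : 0 ≤ (2 * Real.pi) ^ n := by positivity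
    have h7 : |((2 * Real.pi)⁻¹ ^ Module.finrank ℝ (Fin n → ℝ))⁻¹| = (2 * Real.pi) ^ n := by
      rw [Module.finrank_fin_fun, inv_pow, inv_inv, abs_of_nonneg h6]
    rw [h7, Complex.real_smul]

theorem aux_xi_sm {α : Type*} [MeasurableSpace α] (ξ : α → ell2)
    (hξmeas : ∀ e : ell2, Measurable fun p => ⟪e, ξ p⟫) : StronglyMeasurable ξ := by
  have hc : ∀ k : ℕ, Measurable fun p => (ξ p : ℕ → ℂ) k := by
    intro k
    have := hξmeas (lp.single 2 k (1 : ℂ))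
    convert this using 2 with p
    rw [lp.inner_single_left]
    simp
  refine stronglyMeasurable_of_tendsto Filter.atTop
    (f := fun N p => ∑ k ∈ Finset.range N, lp.single 2 k ((ξ p : ℕ → ℂ) k)) ?_ ?_
  · intro N
    refine Finset.stronglyMeasurable_fun_sum _ fun k _ => ?_
    have h : ∀ p, lp.single (E := fun _ : ℕ => ℂ) 2 k ((ξ p : ℕ → ℂ) k)
        = ((ξ p : ℕ → ℂ) k) • lp.single (E := fun _ : ℕ => ℂ) 2 k (1 : ℂ) := by
      intro p
      rw [← lp.single_smul]; simp
    simp only [h]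
    exact (hc k).stronglyMeasurable.smul_const _
  · rw [tendsto_pi_nhds]
    intro p
    exact (lp.hasSum_single (by norm_num) (ξ p)).tendsto_sum_nat

set_option linter.unusedSectionVars false

section FTlemmas
variable {n : ℕ} {F : Type*} [NormedAddCommGroup F] [InnerProductSpace ℂ F] [CompleteSpace F]

theorem aux_norm_exp (x p : Fin n → ℝ) :
    ‖Complex.exp (-(Complex.I * ((∑ k, x k * p k : ℝ) : ℂ)))‖ = 1 := by
  rw [Complex.norm_exp]
  simp

theorem aux_exp_cont (x : Fin n → ℝ) :
    Continuous fun p : Fin n → ℝ => Complex.exp (-(Complex.I * ((∑ k, x k * p k : ℝ) : ℂ))) := by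
  fun_prop

theorem aux_FT_int {μ : Measure (Fin n → ℝ)} {g : (Fin n → ℝ) → F} (hg : Integrable g μ)
    (x : Fin n → ℝ) :
    Integrable (fun p => Complex.exp (-(Complex.I * ((∑ k, x k * p k : ℝ) : ℂ))) • g p) μ := by
  refine hg.mono ((aux_exp_cont x).aestronglyMeasurable.smul hg.1) ?_
  filter_upwards with p
  rw [norm_smul, aux_norm_exp, one_mul]

theorem aux_FT_cont {μ : Measure (Fin n → ℝ)} {g : (Fin n → ℝ) → F} (hg : Integrable g μ) :
    Continuous (FT μ g) := by
  unfold FT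
  refine continuous_of_dominated (bound := fun p => ‖g p‖) ?_ ?_ hg.norm ?_
  · intro x; exact (aux_FT_int hg x).1
  · intro x
    filter_upwards with p
    rw [norm_smul, aux_norm_exp, one_mul]
  · filter_upwards with p
    fun_prop

theorem aux_FT_clm {μ : Measure (Fin n → ℝ)} {g : (Fin n → ℝ) → F} (hg : Integrable g μ)
    (A : F →L[ℂ] F) (x : Fin n → ℝ) : A (FT μ g x) = FT μ (fun p => A (g p)) x := by
  unfold FT
  rw [← A.integral_comp_comm (aux_FT_int hg x)]
  simp

theorem aux_FT_restrict {Λ : Set (Fin n → ℝ)} (hΛ : MeasurableSet Λ) (g : (Fin n → ℝ) → F) :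
    FT (volume.restrict Λ) g = FT volume (Λ.indicator g) := by
  ext1 x
  unfold FT
  rw [← integral_indicator hΛ]
  congr 1
  ext1 p
  by_cases h : p ∈ Λ <;> simp [h]

theorem aux_plancherel_restrict {Λ : Set (Fin n → ℝ)} (hΛ : MeasurableSet Λ)
    (g h : (Fin n → ℝ) → F) (hg : Integrable g (volume.restrict Λ))
    (hg2 : MemLp g 2 (volume.restrict Λ))
    (hh : Integrable h (volume.restrict Λ)) (hh2 : MemLp h 2 (volume.restrict Λ)) :
    MemLp (FT (volume.restrict Λ) g) 2 ∧
    ∫ x, ⟪FT (volume.restrict Λ) g x, FT (volume.restrict Λ) h x⟫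
      = (((2 * Real.pi) ^ n : ℝ) : ℂ) * ∫ x, ⟪g x, h x⟫ ∂(volume.restrict Λ) := by
  rw [aux_FT_restrict hΛ, aux_FT_restrict hΛ]
  have := aux_plancherel (Λ.indicator g) (Λ.indicator h) ((integrable_indicator_iff hΛ).2 hg)
    ((memLp_indicator_iff_restrict hΛ).2 hg2) ((integrable_indicator_iff hΛ).2 hh)
    ((memLp_indicator_iff_restrict hΛ).2 hh2)
  refine ⟨this.1, this.2.trans ?_⟩
  rw [← integral_indicator hΛ]
  congr 2
  ext1 p
  by_cases h : p ∈ Λ <;> simp [h]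

end FTlemmas

section setup
variable {n : ℕ} {μ : Measure (Fin n → ℝ)} {ξ : (Fin n → ℝ) → ell2}

theorem aux_int_smul (hξm : StronglyMeasurable ξ) (hξnorm : ∀ᵐ p ∂μ, ‖ξ p‖ = 1)
    {φ : (Fin n → ℝ) → ℂ} (hφ : Integrable φ μ) : Integrable (fun p => φ p • ξ p) μ := by
  refine hφ.mono (hφ.1.smul hξm.aestronglyMeasurable) ?_
  filter_upwards [hξnorm] with p hp
  rw [norm_smul, hp, mul_one]

theorem aux_memLp_smul (hξm : StronglyMeasurable ξ) (hξnorm : ∀ᵐ p ∂μ, ‖ξ p‖ = 1)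
    {φ : (Fin n → ℝ) → ℂ} (hφ : MemLp φ 2 μ) : MemLp (fun p => φ p • ξ p) 2 μ := by
  refine hφ.mono (hφ.1.smul hξm.aestronglyMeasurable) ?_
  filter_upwards [hξnorm] with p hp
  rw [norm_smul, hp, mul_one]

/-- `L¹ ∩ L²` as a subspace of `L²`. -/
def DD (μ : Measure (Fin n → ℝ)) : Submodule ℂ (Lp ℂ 2 μ) where
  carrier := {φ | Integrable φ μ}
  add_mem' := by
    intro a b ha hb
    exact (Integrable.add ha hb).congr (Lp.coeFn_add a b).symm
  zero_mem' := by
    exact (integrable_zero _ _ _).congr (Lp.coeFn_zero ℂ 2 μ).symm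
  smul_mem' := by
    intro c a ha
    exact (Integrable.smul c ha).congr (Lp.coeFn_smul c a).symm

theorem aux_mem_DD (φ : Lp ℂ 2 μ) : φ ∈ DD μ ↔ Integrable φ μ := Iff.rfl

theorem aux_toLp_mem_DD {φ : (Fin n → ℝ) → ℂ} (h1 : Integrable φ μ) (h2 : MemLp φ 2 μ) :
    h2.toLp φ ∈ DD μ := h1.congr h2.coeFn_toLp.symm

theorem aux_DD_dense : Dense (DD μ : Set (Lp ℂ 2 μ)) := by
  have h := Lp.simpleFunc.denseRange (E := ℂ) (μ := μ) (p := 2) (by norm_num)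
  refine h.mono ?_
  rintro _ ⟨f, rfl⟩
  have h1 := Lp.simpleFunc.memLp f
  have h2 : Integrable (Lp.simpleFunc.toSimpleFunc f) μ :=
    (SimpleFunc.memLp_iff_integrable (by norm_num) (by norm_num)).1 h1
  exact h2.congr (Lp.simpleFunc.toSimpleFunc_eq_toFun f)

/-- The transform. -/
noncomputable def TT (μ : Measure (Fin n → ℝ)) (ξ : (Fin n → ℝ) → ell2) (φ : (Fin n → ℝ) → ℂ) :
    (Fin n → ℝ) → ell2 := FT μ (fun p => φ p • ξ p)

theorem aux_TT_congr {φ ψ : (Fin n → ℝ) → ℂ} (h : φ =ᵐ[μ] ψ) : TT μ ξ φ = TT μ ξ ψ := by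
  ext1 x
  unfold TT FT
  apply integral_congr_ae
  filter_upwards [h] with p hp
  rw [hp]

theorem aux_TT_add (hξm : StronglyMeasurable ξ) (hξnorm : ∀ᵐ p ∂μ, ‖ξ p‖ = 1)
    {φ ψ : Lp ℂ 2 μ} (hφ : φ ∈ DD μ) (hψ : ψ ∈ DD μ) :
    TT μ ξ (φ + ψ : Lp ℂ 2 μ) = TT μ ξ φ + TT μ ξ ψ := by
  rw [aux_TT_congr (Lp.coeFn_add φ ψ)]
  ext1 x
  simp only [TT, FT, Pi.add_apply, add_smul, smul_add]
  exact integral_add (aux_FT_int (aux_int_smul hξm hξnorm hφ) x)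
    (aux_FT_int (aux_int_smul hξm hξnorm hψ) x)

theorem aux_TT_smul (c : ℂ) (φ : Lp ℂ 2 μ) :
    TT μ ξ (c • φ : Lp ℂ 2 μ) = c • TT μ ξ φ := by
  rw [aux_TT_congr (Lp.coeFn_smul c φ)]
  ext1 x
  simp only [TT, FT, Pi.smul_apply, smul_eq_mul]
  rw [← integral_smul]
  congr 1
  ext1 p
  rw [smul_comm, mul_smul, smul_comm]
  simp only [smul_smul]; congr 1; ring

theorem aux_TT_cont (hξm : StronglyMeasurable ξ) (hξnorm : ∀ᵐ p ∂μ, ‖ξ p‖ = 1)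
    {φ : (Fin n → ℝ) → ℂ} (hφ : Integrable φ μ) : Continuous (TT μ ξ φ) :=
  aux_FT_cont (aux_int_smul hξm hξnorm hφ)

theorem aux_kernel (hξm : StronglyMeasurable ξ) (hξnorm : ∀ᵐ p ∂μ, ‖ξ p‖ = 1)
    {φ ψ : (Fin n → ℝ) → ℂ} (hφ : Integrable φ μ) (hψ : Integrable ψ μ) (x : Fin n → ℝ) :
    (∫ p₁, (∫ p₂, Complex.exp (Complex.I * (∑ k, x k * (p₁ k - p₂ k))) *
                ⟪ξ p₁, ξ p₂⟫ * conj (φ p₁) * ψ p₂ ∂μ) ∂μ) = ⟪TT μ ξ φ x, TT μ ξ ψ x⟫ := by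
  have hφ' := aux_FT_int (aux_int_smul hξm hξnorm hφ) x
  have hψ' := aux_FT_int (aux_int_smul hξm hξnorm hψ) x
  have h1 : ∀ v : ell2, ⟪v, TT μ ξ ψ x⟫ = ∫ p₂, ⟪v, Complex.exp (-(Complex.I * ((∑ k, x k * p₂ k : ℝ) : ℂ))) • ψ p₂ • ξ p₂⟫ ∂μ := by
    intro v
    exact (integral_inner (𝕜 := ℂ) hψ' v).symm
  have h2 : ⟪TT μ ξ φ x, TT μ ξ ψ x⟫ = ∫ p₁, ⟪Complex.exp (-(Complex.I * ((∑ k, x k * p₁ k : ℝ) : ℂ))) • φ p₁ • ξ p₁, TT μ ξ ψ x⟫ ∂μ := by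
    rw [← inner_conj_symm, show TT μ ξ φ x = ∫ p, _ ∂μ from rfl, ← integral_inner hφ', ← integral_conj]
    simp only [inner_conj_symm]
  rw [h2]
  congr 1
  ext1 p₁
  rw [h1]
  congr 1
  ext1 p₂
  simp only [inner_smul_left, inner_smul_right]
  rw [← Complex.exp_conj]
  have : Complex.exp (Complex.I * (∑ k, x k * (p₁ k - p₂ k))) = Complex.exp (conj (-(Complex.I * ((∑ k, x k * p₁ k : ℝ) : ℂ)))) * Complex.exp (-(Complex.I * ((∑ k, x k * p₂ k : ℝ) : ℂ))) := by
    rw [← Complex.exp_add]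
    congr 1
    simp [mul_sub, Finset.sum_sub_distrib]
    ring
  rw [this]
  ring

end setup

section three
variable {n : ℕ} {Λ : Set (Fin n → ℝ)} {ξ : (Fin n → ℝ) → ell2}

theorem aux_PL (hΛ : MeasurableSet Λ) (hξm : StronglyMeasurable ξ)
    (hξnorm : ∀ᵐ p ∂(volume.restrict Λ), ‖ξ p‖ = 1)
    {φ ψ : (Fin n → ℝ) → ℂ} (hφ : Integrable φ (volume.restrict Λ))
    (hψ : Integrable ψ (volume.restrict Λ)) (hφ2 : MemLp φ 2 (volume.restrict Λ))
    (hψ2 : MemLp ψ 2 (volume.restrict Λ)) (A : ell2 →L[ℂ] ell2) :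
    MemLp (TT (volume.restrict Λ) ξ φ) 2 volume ∧
    Integrable (fun x => ⟪TT (volume.restrict Λ) ξ φ x, A (TT (volume.restrict Λ) ξ ψ x)⟫) ∧
    ∫ x, ⟪TT (volume.restrict Λ) ξ φ x, A (TT (volume.restrict Λ) ξ ψ x)⟫
      = (((2 * Real.pi) ^ n : ℝ) : ℂ) *
        ∫ p, conj (φ p) * ψ p * ⟪ξ p, A (ξ p)⟫ ∂(volume.restrict Λ) := by
  have g1 := aux_int_smul hξm hξnorm hφ
  have g2 := aux_memLp_smul hξm hξnorm hφ2
  have h1 := aux_int_smul hξm hξnorm hψ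
  have h2 := aux_memLp_smul hξm hξnorm hψ2
  have P := aux_plancherel_restrict hΛ _ _ g1 g2 (A.integrable_comp h1) (A.comp_memLp' h2)
  have P' := aux_plancherel_restrict hΛ _ _ h1 h2 h1 h2
  refine ⟨P.1, ?_, ?_⟩
  · have hA : MemLp (fun x => A (TT (volume.restrict Λ) ξ ψ x)) 2 volume := A.comp_memLp' P'.1
    have := L2.integrable_inner (𝕜 := ℂ) (P.1.toLp _) (hA.toLp _)
    refine this.congr ?_
    filter_upwards [P.1.coeFn_toLp, hA.coeFn_toLp] with x hx1 hx2
    rw [hx1, hx2]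
    rfl
  · have e : ∀ x, A (TT (volume.restrict Λ) ξ ψ x) = FT (volume.restrict Λ) (fun p => A (ψ p • ξ p)) x :=
      fun x => aux_FT_clm h1 A x
    simp only [e]
    refine P.2.trans ?_
    congr 2
    ext1 p
    simp [inner_smul_left, inner_smul_right]
    ring

theorem aux_TT_U {μ : Measure (Fin n → ℝ)} {q : Fin n → ℝ} {φ φ' : (Fin n → ℝ) → ℂ}
    (h : φ' =ᵐ[μ] fun p => Complex.exp (Complex.I * ((∑ k, q k * p k : ℝ) : ℂ)) * φ p)
    (x : Fin n → ℝ) : TT μ ξ φ' x = TT μ ξ φ (x - q) := by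
  rw [aux_TT_congr h]
  unfold TT FT
  congr 1
  ext1 p
  simp only [smul_smul]
  rw [← mul_assoc, ← Complex.exp_add]
  congr 3
  simp [sub_mul, Finset.sum_sub_distrib]
  ring

theorem aux_U_int {μ : Measure (Fin n → ℝ)} {q : Fin n → ℝ} {φ φ' : (Fin n → ℝ) → ℂ}
    (h : φ' =ᵐ[μ] fun p => Complex.exp (Complex.I * ((∑ k, q k * p k : ℝ) : ℂ)) * φ p)
    (hφ : Integrable φ μ) : Integrable φ' μ := by
  have := aux_FT_int (F := ℂ) hφ (-q)
  refine this.congr ?_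
  filter_upwards [h] with p hp
  rw [hp]
  simp

/-- matrix formula on DD -/
theorem aux_MF (hξm : StronglyMeasurable ξ)
    (hξnorm : ∀ᵐ p ∂(volume.restrict Λ), ‖ξ p‖ = 1)
    (M : POVM (Fin n → ℝ) (Lp ℂ 2 (volume.restrict Λ))) (hMform : MatrixFormula n Λ ξ M)
    {φ ψ : Lp ℂ 2 (volume.restrict Λ)} (hφ : φ ∈ DD (volume.restrict Λ))
    (hψ : ψ ∈ DD (volume.restrict Λ)) {B : Set (Fin n → ℝ)} (hB : MeasurableSet B) :
    ⟪φ, M.toFun B ψ⟫ = (((2 * Real.pi) ^ n : ℝ) : ℂ)⁻¹ *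
      ∫ x in B, ⟪TT (volume.restrict Λ) ξ φ x, TT (volume.restrict Λ) ξ ψ x⟫ := by
  have := hMform φ ψ hφ hψ (Lp.memLp φ) (Lp.memLp ψ) B hB
  simp only [Lp.toLp_coeFn] at this
  rw [this]
  congr 2
  ext1 x
  exact aux_kernel hξm hξnorm hφ hψ x

/-- `J`. -/
theorem aux_TT_zero (φ : (Fin n → ℝ) → ℂ) (μ : Measure (Fin n → ℝ)) :
    TT μ ξ φ 0 = ∫ p, φ p • ξ p ∂μ := by
  simp [TT, FT]
  rfl

theorem aux_gen_mem {φ : Lp ℂ 2 (volume.restrict Λ)} (hφ : φ ∈ DD (volume.restrict Λ)) :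
    TT (volume.restrict Λ) ξ φ 0 ∈ genSubspace n Λ ξ := by
  apply Submodule.le_topologicalClosure
  apply Submodule.subset_span
  exact ⟨φ, hφ, Lp.memLp φ, aux_TT_zero _ _⟩

/-- `J` as a linear map. -/
noncomputable def JJ (hξm : StronglyMeasurable ξ)
    (hξnorm : ∀ᵐ p ∂(volume.restrict Λ), ‖ξ p‖ = 1) :
    DD (volume.restrict Λ) →ₗ[ℂ] genSubspace n Λ ξ where
  toFun φ := ⟨TT (volume.restrict Λ) ξ (φ : Lp ℂ 2 (volume.restrict Λ)) 0, aux_gen_mem φ.2⟩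
  map_add' a b := by
    apply Subtype.ext
    simp only [Submodule.coe_add]
    rw [aux_TT_add hξm hξnorm a.2 b.2]
    rfl
  map_smul' c a := by
    apply Subtype.ext
    simp only [Submodule.coe_smul, RingHom.id_apply]
    rw [aux_TT_smul]
    rfl

theorem aux_JJ_dense (hξm : StronglyMeasurable ξ)
    (hξnorm : ∀ᵐ p ∂(volume.restrict Λ), ‖ξ p‖ = 1) : DenseRange (JJ hξm hξnorm) := by
  have h1 : ∀ v ∈ (Submodule.span ℂ {v : ell2 | ∃ φ : (Fin n → ℝ) → ℂ,
    Integrable φ (volume.restrict Λ) ∧ MemLp φ 2 (volume.restrict Λ) ∧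
      v = ∫ p, φ p • ξ p ∂(volume.restrict Λ)}), ∃ φ, (JJ hξm hξnorm φ : ell2) = v := by
    intro v hv
    have : v ∈ LinearMap.range ((genSubspace n Λ ξ).subtype ∘ₗ JJ hξm hξnorm) := by
      refine Submodule.span_le.2 ?_ hv
      rintro _ ⟨φ, h1, h2, rfl⟩
      refine ⟨⟨h2.toLp φ, aux_toLp_mem_DD h1 h2⟩, ?_⟩
      change TT _ ξ (h2.toLp φ) 0 = _
      rw [aux_TT_congr h2.coeFn_toLp, aux_TT_zero]
    exact this
  intro w
  have hw : (w : ell2) ∈ closure (Submodule.span ℂ {v : ell2 | ∃ φ : (Fin n → ℝ) → ℂ,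
    Integrable φ (volume.restrict Λ) ∧ MemLp φ 2 (volume.restrict Λ) ∧
      v = ∫ p, φ p • ξ p ∂(volume.restrict Λ)} : Set ell2) := w.2
  rw [closure_subtype]
  refine closure_mono ?_ hw
  intro v hv
  obtain ⟨φ, hφ⟩ := h1 v hv
  exact ⟨JJ hξm hξnorm φ, ⟨φ, rfl⟩, hφ⟩

theorem aux_xi_mem (hξm : StronglyMeasurable ξ)
    (hξnorm : ∀ᵐ p ∂(volume.restrict Λ), ‖ξ p‖ = 1) :
    ∀ᵐ p ∂(volume.restrict Λ), ξ p ∈ genSubspace n Λ ξ := by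
  have hcl : IsClosed (genSubspace n Λ ξ : Set ell2) := Submodule.isClosed_topologicalClosure _
  have : CompleteSpace (genSubspace n Λ ξ) := hcl.completeSpace_coe
  set P := (genSubspace n Λ ξ).starProjection with hP
  have key : ∀ᵐ p ∂(volume.restrict Λ), ξ p - P (ξ p) = 0 := by
    have hio : ∀ s, MeasurableSet s → (volume.restrict Λ) s < ⊤ → IntegrableOn ξ s (volume.restrict Λ) := by
      intro s hs hfin
      have : IsFiniteMeasure ((volume.restrict Λ).restrict s) := ⟨by simpa using hfin⟩
      refine (integrable_const (1 : ℝ)).mono' hξm.aestronglyMeasurable ?_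
      filter_upwards [ae_restrict_of_ae hξnorm] with p hp using hp.le
    refine ae_eq_zero_of_forall_setIntegral_eq_of_sigmaFinite ?_ ?_
    · intro s hs hfin
      exact (hio s hs hfin).sub (P.integrable_comp (hio s hs hfin))
    · intro s hs hfin
      rw [integral_sub (hio s hs hfin) (P.integrable_comp (hio s hs hfin)),
        P.integral_comp_comm (hio s hs hfin), sub_eq_zero]
      symm
      rw [hP, Submodule.starProjection_eq_self_iff]
      have h2 : MemLp (s.indicator (fun _ => (1 : ℂ))) 2 (volume.restrict Λ) :=
        memLp_indicator_const 2 hs 1 (Or.inr hfin.ne)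
      have h1 : Integrable (s.indicator (fun _ => (1 : ℂ))) (volume.restrict Λ) :=
        (integrable_indicator_iff hs).2 (integrableOn_const hfin.ne)
      apply Submodule.le_topologicalClosure
      apply Submodule.subset_span
      refine ⟨_, h1, h2, ?_⟩
      rw [← integral_indicator hs]
      congr 1
      ext1 p
      by_cases h : p ∈ s <;> simp [h]
  filter_upwards [key] with p hp
  rw [← Submodule.starProjection_eq_self_iff]
  exact (sub_eq_zero.1 hp).symm

end three

section four
variable {n : ℕ} {Λ : Set (Fin n → ℝ)} {ξ : (Fin n → ℝ) → ell2}

theorem aux_TT_memLp (hΛ : MeasurableSet Λ) (hξm : StronglyMeasurable ξ)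
    (hξnorm : ∀ᵐ p ∂(volume.restrict Λ), ‖ξ p‖ = 1)
    (φ : DD (volume.restrict Λ)) :
    MemLp (TT (volume.restrict Λ) ξ (φ : Lp ℂ 2 (volume.restrict Λ))) 2 volume :=
  (aux_PL hΛ hξm hξnorm φ.2 φ.2 (Lp.memLp _) (Lp.memLp _) 0).1

/-- `W` on the dense subspace. -/
noncomputable def W0 (hΛ : MeasurableSet Λ) (hξm : StronglyMeasurable ξ)
    (hξnorm : ∀ᵐ p ∂(volume.restrict Λ), ‖ξ p‖ = 1) :
    DD (volume.restrict Λ) →ₗ[ℂ] Lp ell2 2 (volume : Measure (Fin n → ℝ)) where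
  toFun φ := (aux_TT_memLp hΛ hξm hξnorm φ).toLp _
  map_add' a b := by
    rw [← MemLp.toLp_add]
    exact MemLp.toLp_congr _ _ (Filter.EventuallyEq.of_eq (aux_TT_add hξm hξnorm a.2 b.2))
  map_smul' c a := by
    rw [RingHom.id_apply, ← MemLp.toLp_const_smul]
    exact MemLp.toLp_congr _ _ (Filter.EventuallyEq.of_eq (aux_TT_smul c _))

theorem aux_PL_inner (hΛ : MeasurableSet Λ) (hξm : StronglyMeasurable ξ)
    (hξnorm : ∀ᵐ p ∂(volume.restrict Λ), ‖ξ p‖ = 1)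
    {φ ψ : Lp ℂ 2 (volume.restrict Λ)} (hφ : φ ∈ DD (volume.restrict Λ))
    (hψ : ψ ∈ DD (volume.restrict Λ)) (Q : ell2 →L[ℂ] ell2) (a : ℂ)
    (hQ : ∀ᵐ p ∂(volume.restrict Λ), ⟪ξ p, Q (ξ p)⟫ = a) :
    ∫ x, ⟪TT (volume.restrict Λ) ξ φ x, Q (TT (volume.restrict Λ) ξ ψ x)⟫
      = (((2 * Real.pi) ^ n : ℝ) : ℂ) * (a * ⟪φ, ψ⟫) := by
  rw [(aux_PL hΛ hξm hξnorm hφ hψ (Lp.memLp _) (Lp.memLp _) Q).2.2, L2.inner_def]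
  congr 1
  rw [← integral_const_mul]
  apply integral_congr_ae
  filter_upwards [hQ] with p hp
  rw [hp]
  simp
  ring

theorem aux_xi_inner {μ : Measure (Fin n → ℝ)}
    (hξnorm : ∀ᵐ p ∂μ, ‖ξ p‖ = 1) :
    ∀ᵐ p ∂μ, ⟪ξ p, (1 : ell2 →L[ℂ] ell2) (ξ p)⟫ = 1 := by
  filter_upwards [hξnorm] with p hp
  simp [inner_self_eq_norm_sq_to_K, hp]

theorem aux_W0_norm (hΛ : MeasurableSet Λ) (hξm : StronglyMeasurable ξ)
    (hξnorm : ∀ᵐ p ∂(volume.restrict Λ), ‖ξ p‖ = 1) (φ : DD (volume.restrict Λ)) :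
    ‖W0 hΛ hξm hξnorm φ‖ ≤ √((2 * Real.pi) ^ n) * ‖(DD (volume.restrict Λ)).subtype φ‖ := by
  have h1 : ⟪W0 hΛ hξm hξnorm φ, W0 hΛ hξm hξnorm φ⟫ = (((2 * Real.pi) ^ n : ℝ) : ℂ) *
     (1 * ⟪(φ : Lp ℂ 2 (volume.restrict Λ)), (φ : Lp ℂ 2 (volume.restrict Λ))⟫) := by
    rw [← aux_PL_inner hΛ hξm hξnorm φ.2 φ.2 1 1 (aux_xi_inner hξnorm), L2.inner_def]
    apply integral_congr_ae
    filter_upwards [(aux_TT_memLp hΛ hξm hξnorm φ).coeFn_toLp] with x hx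
    change ⟪((aux_TT_memLp hΛ hξm hξnorm φ).toLp _) x, ((aux_TT_memLp hΛ hξm hξnorm φ).toLp _) x⟫ = _
    rw [hx]
    rfl
  rw [inner_self_eq_norm_sq_to_K, inner_self_eq_norm_sq_to_K, one_mul] at h1
  have h2 : ‖W0 hΛ hξm hξnorm φ‖ ^ 2 = (2 * Real.pi) ^ n * ‖(φ : Lp ℂ 2 (volume.restrict Λ))‖ ^ 2 := by
    apply Complex.ofReal_injective
    push_cast
    push_cast at h1
    exact h1
  have h3 : (0 : ℝ) ≤ (2 * Real.pi) ^ n := by positivity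
  refine (sq_le_sq₀ (norm_nonneg _) (by positivity)).1 ?_
  rw [h2, mul_pow √_ _ 2, Real.sq_sqrt h3]
  rfl

/-- `W` -/
noncomputable def WW (hΛ : MeasurableSet Λ) (hξm : StronglyMeasurable ξ)
    (hξnorm : ∀ᵐ p ∂(volume.restrict Λ), ‖ξ p‖ = 1) :
    Lp ℂ 2 (volume.restrict Λ) →L[ℂ] Lp ell2 2 (volume : Measure (Fin n → ℝ)) :=
  (W0 hΛ hξm hξnorm).extendOfNorm (DD (volume.restrict Λ)).subtype

theorem aux_DD_denseRange (μ : Measure (Fin n → ℝ)) : DenseRange (DD μ).subtype := by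
  have := aux_DD_dense (μ := μ)
  rw [DenseRange]
  simpa using this

theorem aux_WW (hΛ : MeasurableSet Λ) (hξm : StronglyMeasurable ξ)
    (hξnorm : ∀ᵐ p ∂(volume.restrict Λ), ‖ξ p‖ = 1)
    {φ : Lp ℂ 2 (volume.restrict Λ)} (hφ : φ ∈ DD (volume.restrict Λ)) :
    (WW hΛ hξm hξnorm φ : (Fin n → ℝ) → ell2) =ᵐ[volume] TT (volume.restrict Λ) ξ φ := by
  have := LinearMap.extendOfNorm_eq (f := W0 hΛ hξm hξnorm) (aux_DD_denseRange _)
    ⟨_, aux_W0_norm hΛ hξm hξnorm⟩ ⟨φ, hφ⟩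
  have h2 : WW hΛ hξm hξnorm φ = (aux_TT_memLp hΛ hξm hξnorm ⟨φ, hφ⟩).toLp _ := this
  rw [h2]
  exact MemLp.coeFn_toLp _

/-- `M_Q(B)` -/
noncomputable def Op (hΛ : MeasurableSet Λ) (hξm : StronglyMeasurable ξ)
    (hξnorm : ∀ᵐ p ∂(volume.restrict Λ), ‖ξ p‖ = 1) (Q : ell2 →L[ℂ] ell2)
    (B : Set (Fin n → ℝ)) :
    Lp ℂ 2 (volume.restrict Λ) →L[ℂ] Lp ℂ 2 (volume.restrict Λ) :=
  (((2 * Real.pi) ^ n : ℝ) : ℂ)⁻¹ •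
    (ContinuousLinearMap.adjoint
      (LpToLpRestrictCLM (Fin n → ℝ) ell2 ℂ volume 2 B ∘L WW hΛ hξm hξnorm) ∘L
      (Q.compLpL 2 (volume.restrict B)) ∘L
      (LpToLpRestrictCLM (Fin n → ℝ) ell2 ℂ volume 2 B ∘L WW hΛ hξm hξnorm))

theorem aux_Op_inner (hΛ : MeasurableSet Λ) (hξm : StronglyMeasurable ξ)
    (hξnorm : ∀ᵐ p ∂(volume.restrict Λ), ‖ξ p‖ = 1) (Q : ell2 →L[ℂ] ell2)
    (B : Set (Fin n → ℝ)) (φ ψ : Lp ℂ 2 (volume.restrict Λ)) :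
    ⟪φ, Op hΛ hξm hξnorm Q B ψ⟫ = (((2 * Real.pi) ^ n : ℝ) : ℂ)⁻¹ *
      ∫ x in B, ⟪WW hΛ hξm hξnorm φ x, Q (WW hΛ hξm hξnorm ψ x)⟫ := by
  simp only [Op, _root_.smul_apply, inner_smul_right]
  congr 1
  rw [ContinuousLinearMap.comp_apply, ContinuousLinearMap.adjoint_inner_right, L2.inner_def]
  apply integral_congr_ae
  filter_upwards [LpToLpRestrictCLM_coeFn ℂ B (WW hΛ hξm hξnorm φ),
    LpToLpRestrictCLM_coeFn ℂ B (WW hΛ hξm hξnorm ψ),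
    Q.coeFn_compLpL (p := 2) (μ := volume.restrict B)
      ((LpToLpRestrictCLM (Fin n → ℝ) ell2 ℂ volume 2 B ∘L WW hΛ hξm hξnorm) ψ)] with x h1 h2 h3
  rw [ContinuousLinearMap.comp_apply, ContinuousLinearMap.comp_apply, h3,
    ContinuousLinearMap.comp_apply, h1, h2]

theorem aux_Op_inner_DD (hΛ : MeasurableSet Λ) (hξm : StronglyMeasurable ξ)
    (hξnorm : ∀ᵐ p ∂(volume.restrict Λ), ‖ξ p‖ = 1) (Q : ell2 →L[ℂ] ell2)
    (B : Set (Fin n → ℝ)) {φ ψ : Lp ℂ 2 (volume.restrict Λ)}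
    (hφ : φ ∈ DD (volume.restrict Λ)) (hψ : ψ ∈ DD (volume.restrict Λ)) :
    ⟪φ, Op hΛ hξm hξnorm Q B ψ⟫ = (((2 * Real.pi) ^ n : ℝ) : ℂ)⁻¹ *
      ∫ x in B, ⟪TT (volume.restrict Λ) ξ φ x, Q (TT (volume.restrict Λ) ξ ψ x)⟫ := by
  rw [aux_Op_inner]
  congr 1
  apply integral_congr_ae
  filter_upwards [ae_restrict_of_ae (aux_WW hΛ hξm hξnorm hφ),
    ae_restrict_of_ae (aux_WW hΛ hξm hξnorm hψ)] with x h1 h2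
  rw [h1, h2]

theorem aux_ext_DD {μ : Measure (Fin n → ℝ)} {S T : Lp ℂ 2 μ →L[ℂ] Lp ℂ 2 μ}
    (h : ∀ φ ∈ DD μ, ∀ ψ ∈ DD μ, ⟪φ, S ψ⟫ = ⟪φ, T ψ⟫) : S = T := by
  have h1 : ∀ ψ ∈ DD μ, S ψ = T ψ := by
    intro ψ hψ
    exact aux_DD_dense.eq_of_inner_right (𝕜 := ℂ) (fun φ hφ => h φ hφ ψ hψ)
  exact ContinuousLinearMap.ext fun ψ => congrFun
    (Continuous.ext_on aux_DD_dense S.continuous T.continuous h1) ψ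

/-- The POVM `M_Q`. -/
noncomputable def MQ (hΛ : MeasurableSet Λ) (hξm : StronglyMeasurable ξ)
    (hξnorm : ∀ᵐ p ∂(volume.restrict Λ), ‖ξ p‖ = 1) (Q : ell2 →L[ℂ] ell2)
    (hQpos : Q.IsPositive)
    (hQ : ∀ᵐ p ∂(volume.restrict Λ), ⟪ξ p, Q (ξ p)⟫ = 1) :
    POVM (Fin n → ℝ) (Lp ℂ 2 (volume.restrict Λ)) where
  toFun := Op hΛ hξm hξnorm Q
  isPositive := by
    intro B hB
    rw [ContinuousLinearMap.isPositive_iff_complex]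
    intro φ
    have h0 : ∀ x : ell2, ⟪x, Q x⟫ = (((⟪x, Q x⟫).re : ℝ) : ℂ) := by
      intro x
      have := hQpos.inner_nonneg_right x
      rw [Complex.le_def] at this
      apply Complex.ext <;> simp
      exact this.2.symm
    have h1 : ⟪φ, Op hΛ hξm hξnorm Q B φ⟫ = (((((2 * Real.pi) ^ n : ℝ))⁻¹ *
      ∫ x in B, (⟪WW hΛ hξm hξnorm φ x, Q (WW hΛ hξm hξnorm φ x)⟫).re : ℝ) : ℂ) := by
      rw [aux_Op_inner]
      push_cast
      congr 1
      rw [← integral_complex_ofReal]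
      congr 1
      ext1 x
      exact h0 _
    rw [← inner_conj_symm, h1]
    rw [Complex.conj_ofReal]
    have hgen : ∀ r : ℝ, 0 ≤ r → (((RCLike.re (r : ℂ) : ℝ) : ℂ) = (r : ℂ) ∧ 0 ≤ RCLike.re (r : ℂ)) :=
      fun r hr => ⟨rfl, hr⟩
    refine hgen _ ?_
    refine mul_nonneg (by positivity) (integral_nonneg fun x => ?_)
    exact hQpos.re_inner_nonneg_right _
  normalized := by
    apply aux_ext_DD
    intro φ hφ ψ hψ
    rw [aux_Op_inner_DD hΛ hξm hξnorm Q _ hφ hψ, Measure.restrict_univ,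
      aux_PL_inner hΛ hξm hξnorm hφ hψ Q 1 hQ]
    have : (((2 * Real.pi) ^ n : ℝ) : ℂ) ≠ 0 := by
      have : (2 * Real.pi) ^ n ≠ 0 := by positivity
      exact_mod_cast this
    rw [one_mul, inv_mul_cancel_left₀ this]
    rfl
  m_iUnion := by
    intro B hB hd φ ψ
    simp only [aux_Op_inner]
    apply HasSum.mul_left
    apply hasSum_integral_iUnion hB hd
    have := L2.integrable_inner (𝕜 := ℂ) (WW hΛ hξm hξnorm φ) (Q.compLpL 2 volume (WW hΛ hξm hξnorm ψ))
    refine Integrable.integrableOn (this.congr ?_)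
    filter_upwards [Q.coeFn_compLpL (p := 2) (μ := volume) (WW hΛ hξm hξnorm ψ)] with x hx
    rw [hx]

theorem aux_MQ_cov (hΛ : MeasurableSet Λ) (hξm : StronglyMeasurable ξ)
    (hξnorm : ∀ᵐ p ∂(volume.restrict Λ), ‖ξ p‖ = 1) (Q : ell2 →L[ℂ] ell2)
    (hQpos : Q.IsPositive)
    (hQ : ∀ᵐ p ∂(volume.restrict Λ), ⟪ξ p, Q (ξ p)⟫ = 1)
    (U : (Fin n → ℝ) →
      (Lp ℂ 2 (volume.restrict Λ) ≃ₗᵢ[ℂ] Lp ℂ 2 (volume.restrict Λ)))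
    (hU : ∀ q : Fin n → ℝ, ∀ φ : Lp ℂ 2 (volume.restrict Λ),
      (U q φ : (Fin n → ℝ) → ℂ) =ᵐ[volume.restrict Λ]
        fun p => Complex.exp (Complex.I * (∑ k, q k * p k)) * φ p) :
    IsCovariantPos n Λ U (MQ hΛ hξm hξnorm Q hQpos hQ) := by
  intro q B hB φ ψ
  set Uq : Lp ℂ 2 (volume.restrict Λ) →L[ℂ] Lp ℂ 2 (volume.restrict Λ) :=
    (U q).toContinuousLinearEquiv.toContinuousLinearMap with hUq
  have hUq' : ∀ φ, Uq φ = U q φ := fun φ => rfl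
  have key : ContinuousLinearMap.adjoint Uq ∘L
      (Op hΛ hξm hξnorm Q ((fun x => x + q) '' B)) ∘L Uq = Op hΛ hξm hξnorm Q B := by
    apply aux_ext_DD
    intro φ hφ ψ hψ
    rw [ContinuousLinearMap.comp_apply, ContinuousLinearMap.adjoint_inner_right,
      ContinuousLinearMap.comp_apply, hUq', hUq',
      aux_Op_inner_DD hΛ hξm hξnorm Q _ (aux_U_int (hU q φ) hφ) (aux_U_int (hU q ψ) hψ),
      aux_Op_inner_DD hΛ hξm hξnorm Q _ hφ hψ]
    congr 1
    simp only [aux_TT_U (hU q φ), aux_TT_U (hU q ψ)]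
    have hmp : MeasurePreserving (fun x : Fin n → ℝ => x + q) volume volume :=
      measurePreserving_add_right volume q
    have hme : MeasurableEmbedding (fun x : Fin n → ℝ => x + q) :=
      (MeasurableEquiv.addRight q).measurableEmbedding
    rw [hmp.setIntegral_image_emb hme]
    simp
  have h2 := congrArg (fun T => ⟪φ, T ψ⟫) key
  change ⟪φ, (ContinuousLinearMap.adjoint Uq ∘L
      (Op hΛ hξm hξnorm Q ((fun x => x + q) '' B)) ∘L Uq) ψ⟫ = ⟪φ, Op hΛ hξm hξnorm Q B ψ⟫ at h2
  rw [ContinuousLinearMap.comp_apply, ContinuousLinearMap.adjoint_inner_right,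
      ContinuousLinearMap.comp_apply] at h2
  exact h2

end four

section five
variable {n : ℕ} {Λ : Set (Fin n → ℝ)} {ξ : (Fin n → ℝ) → ell2}

theorem aux_M_eq_Op (hΛ : MeasurableSet Λ) (hξm : StronglyMeasurable ξ)
    (hξnorm : ∀ᵐ p ∂(volume.restrict Λ), ‖ξ p‖ = 1)
    (M : POVM (Fin n → ℝ) (Lp ℂ 2 (volume.restrict Λ))) (hMform : MatrixFormula n Λ ξ M)
    {B : Set (Fin n → ℝ)} (hB : MeasurableSet B) :
    M.toFun B = Op hΛ hξm hξnorm 1 B := by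
  apply aux_ext_DD
  intro φ hφ ψ hψ
  rw [aux_MF hξm hξnorm M hMform hφ hψ hB, aux_Op_inner_DD hΛ hξm hξnorm _ _ hφ hψ]
  rfl

theorem aux_Op_add (hΛ : MeasurableSet Λ) (hξm : StronglyMeasurable ξ)
    (hξnorm : ∀ᵐ p ∂(volume.restrict Λ), ‖ξ p‖ = 1) (S : ell2 →L[ℂ] ell2)
    (B : Set (Fin n → ℝ)) {φ ψ : Lp ℂ 2 (volume.restrict Λ)}
    (hφ : φ ∈ DD (volume.restrict Λ)) (hψ : ψ ∈ DD (volume.restrict Λ)) :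
    ⟪φ, Op hΛ hξm hξnorm (1 + S) B ψ⟫ = ⟪φ, Op hΛ hξm hξnorm 1 B ψ⟫ +
      (((2 * Real.pi) ^ n : ℝ) : ℂ)⁻¹ *
      ∫ x in B, ⟪TT (volume.restrict Λ) ξ φ x, S (TT (volume.restrict Λ) ξ ψ x)⟫ := by
  rw [aux_Op_inner_DD hΛ hξm hξnorm _ _ hφ hψ, aux_Op_inner_DD hΛ hξm hξnorm _ _ hφ hψ, ← mul_add,
    ← integral_add]
  · simp
  · exact (aux_PL hΛ hξm hξnorm hφ hψ (Lp.memLp _) (Lp.memLp _) 1).2.1.integrableOn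
  · exact (aux_PL hΛ hξm hξnorm hφ hψ (Lp.memLp _) (Lp.memLp _) S).2.1.integrableOn

theorem aux_pos_one_add (S : ell2 →L[ℂ] ell2) (hS : IsSelfAdjoint S) (hn : ‖S‖ ≤ 1) :
    (1 + S).IsPositive := by
  refine ContinuousLinearMap.isPositive_def'.2 ⟨(IsSelfAdjoint.one _).add hS, fun x => ?_⟩
  rw [ContinuousLinearMap.reApplyInnerSelf_apply]
  simp only [_root_.add_apply, inner_add_left, map_add]
  have h1 : RCLike.re ⟪(1 : ell2 →L[ℂ] ell2) x, x⟫ = ‖x‖ ^ 2 := by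
    simp [inner_self_eq_norm_sq_to_K]
    norm_cast
  have h2 : |RCLike.re ⟪S x, x⟫| ≤ ‖x‖ ^ 2 := by
    refine (RCLike.abs_re_le_norm _).trans ((norm_inner_le_norm _ _).trans ?_)
    rw [sq]
    gcongr
    exact (S.le_opNorm x).trans (mul_le_of_le_one_left (norm_nonneg _) hn)
  rw [h1]
  linarith [(abs_le.1 h2).1]

/-- Self-adjoint case of the necessity direction (contractive). -/
theorem aux_fwd_sa (hΛ : MeasurableSet Λ) (hξm : StronglyMeasurable ξ)
    (hξnorm : ∀ᵐ p ∂(volume.restrict Λ), ‖ξ p‖ = 1)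
    (U : (Fin n → ℝ) →
      (Lp ℂ 2 (volume.restrict Λ) ≃ₗᵢ[ℂ] Lp ℂ 2 (volume.restrict Λ)))
    (hU : ∀ q : Fin n → ℝ, ∀ φ : Lp ℂ 2 (volume.restrict Λ),
      (U q φ : (Fin n → ℝ) → ℂ) =ᵐ[volume.restrict Λ]
        fun p => Complex.exp (Complex.I * (∑ k, q k * p k)) * φ p)
    (M : POVM (Fin n → ℝ) (Lp ℂ 2 (volume.restrict Λ))) (hMform : MatrixFormula n Λ ξ M)
    (hext : IsExtremeCovariantPos n Λ U M)
    (S : ell2 →L[ℂ] ell2) (hS : IsSelfAdjoint S) (hn : ‖S‖ ≤ 1)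
    (hSξ : ∀ᵐ p ∂(volume.restrict Λ), ⟪ξ p, S (ξ p)⟫ = 0)
    (v w : ell2) (hv : v ∈ genSubspace n Λ ξ) (hw : w ∈ genSubspace n Λ ξ) : ⟪v, S w⟫ = 0 := by
  have hc : (((2 * Real.pi) ^ n : ℝ) : ℂ) ≠ 0 := by
    have : (2 * Real.pi) ^ n ≠ 0 := by positivity
    exact_mod_cast this
  have hone := aux_xi_inner hξnorm
  have hQ1 : ∀ᵐ p ∂(volume.restrict Λ), ⟪ξ p, (1 + S) (ξ p)⟫ = 1 := by
    filter_upwards [hone, hSξ] with p h1 h2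
    rw [_root_.add_apply, inner_add_right, h1, h2, add_zero]
  have hQ2 : ∀ᵐ p ∂(volume.restrict Λ), ⟪ξ p, (1 + -S) (ξ p)⟫ = 1 := by
    filter_upwards [hone, hSξ] with p h1 h2
    rw [_root_.add_apply, inner_add_right, h1, _root_.neg_apply, inner_neg_right, h2, neg_zero,
      add_zero]
  have hP1 := aux_pos_one_add S hS hn
  have hP2 := aux_pos_one_add (-S) hS.neg (by rwa [norm_neg])
  have hE := hext (MQ hΛ hξm hξnorm _ hP1 hQ1) (MQ hΛ hξm hξnorm _ hP2 hQ2)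
    (aux_MQ_cov hΛ hξm hξnorm _ hP1 hQ1 U hU) (aux_MQ_cov hΛ hξm hξnorm _ hP2 hQ2 U hU)
    (1 / 2) (by norm_num) (by norm_num) (by
      intro B hB
      apply aux_ext_DD
      intro φ hφ ψ hψ
      rw [aux_M_eq_Op hΛ hξm hξnorm M hMform hB]
      change _ = ⟪φ, (_ • Op hΛ hξm hξnorm (1 + S) B + _ • Op hΛ hξm hξnorm (1 + -S) B) ψ⟫
      rw [_root_.add_apply, _root_.smul_apply, _root_.smul_apply, inner_add_right, inner_smul_right,
        inner_smul_right, aux_Op_add hΛ hξm hξnorm _ _ hφ hψ, aux_Op_add hΛ hξm hξnorm _ _ hφ hψ]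
      simp only [_root_.neg_apply, inner_neg_right, integral_neg]
      push_cast
      ring)
  have key : ∀ φ ∈ DD (volume.restrict Λ), ∀ ψ ∈ DD (volume.restrict Λ),
      ⟪TT (volume.restrict Λ) ξ φ 0, S (TT (volume.restrict Λ) ξ ψ 0)⟫ = 0 := by
    intro φ hφ ψ hψ
    have hInt1 := (aux_PL hΛ hξm hξnorm hφ hψ (Lp.memLp _) (Lp.memLp _) S).2.1
    have h0 : (fun x => ⟪TT (volume.restrict Λ) ξ φ x, S (TT (volume.restrict Λ) ξ ψ x)⟫) =ᵐ[volume] 0 := by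
      refine ae_eq_zero_of_forall_setIntegral_eq_of_sigmaFinite (fun s _ _ => hInt1.integrableOn) ?_
      intro B hB _
      have h1 : Op hΛ hξm hξnorm (1 + S) B = M.toFun B := (hE B hB).1
      have h2 := aux_Op_add hΛ hξm hξnorm S B hφ hψ
      rw [h1, aux_M_eq_Op hΛ hξm hξnorm M hMform hB] at h2
      have h3 := left_eq_add.1 h2
      exact (mul_eq_zero.1 h3).resolve_left (inv_ne_zero hc)
    have hcont : Continuous (fun x => ⟪TT (volume.restrict Λ) ξ φ x, S (TT (volume.restrict Λ) ξ ψ x)⟫) :=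
      (aux_TT_cont hξm hξnorm hφ).inner (S.continuous.comp (aux_TT_cont hξm hξnorm hψ))
    have := hcont.ae_eq_iff_eq volume continuous_zero |>.1 h0
    exact congrFun this 0
  have hJ := aux_JJ_dense (n := n) (Λ := Λ) hξm hξnorm
  have h2 : ∀ v w : genSubspace n Λ ξ, ⟪(v : ell2), S w⟫ = 0 := by
    intro v w
    refine isClosed_property2 (p := fun v w : genSubspace n Λ ξ => ⟪(v : ell2), S w⟫ = 0) hJ ?_ ?_ v w
    · exact isClosed_eq (by fun_prop) continuous_const
    · intro a b
      exact key a a.2 b b.2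
  exact h2 ⟨v, hv⟩ ⟨w, hw⟩

theorem aux_fwd (hΛ : MeasurableSet Λ) (hξm : StronglyMeasurable ξ)
    (hξnorm : ∀ᵐ p ∂(volume.restrict Λ), ‖ξ p‖ = 1)
    (U : (Fin n → ℝ) →
      (Lp ℂ 2 (volume.restrict Λ) ≃ₗᵢ[ℂ] Lp ℂ 2 (volume.restrict Λ)))
    (hU : ∀ q : Fin n → ℝ, ∀ φ : Lp ℂ 2 (volume.restrict Λ),
      (U q φ : (Fin n → ℝ) → ℂ) =ᵐ[volume.restrict Λ]
        fun p => Complex.exp (Complex.I * (∑ k, q k * p k)) * φ p)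
    (M : POVM (Fin n → ℝ) (Lp ℂ 2 (volume.restrict Λ))) (hMform : MatrixFormula n Λ ξ M)
    (hext : IsExtremeCovariantPos n Λ U M) (A : ell2 →L[ℂ] ell2)
    (hA1 : ∀ v : ell2, A v ∈ genSubspace n Λ ξ)
    (hA2 : ∀ v ∈ (genSubspace n Λ ξ)ᗮ, A v = 0)
    (hA3 : ∀ᵐ p ∂(volume.restrict Λ), ⟪ξ p, A (ξ p)⟫ = 0) : A = 0 := by
  have hcl : IsClosed (genSubspace n Λ ξ : Set ell2) := Submodule.isClosed_topologicalClosure _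
  have : CompleteSpace (genSubspace n Λ ξ) := hcl.completeSpace_coe
  -- general self-adjoint
  have gen : ∀ S : ell2 →L[ℂ] ell2, IsSelfAdjoint S →
      (∀ᵐ p ∂(volume.restrict Λ), ⟪ξ p, S (ξ p)⟫ = 0) →
      ∀ v w : ell2, v ∈ genSubspace n Λ ξ → w ∈ genSubspace n Λ ξ → ⟪v, S w⟫ = 0 := by
    intro S hS hSξ v w hv hw
    by_cases h0 : S = 0
    · simp [h0]
    have hpos : 0 < ‖S‖ := norm_pos_iff.2 h0
    have hsa : IsSelfAdjoint (((‖S‖⁻¹ : ℝ) : ℂ) • S) := by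
      refine IsSelfAdjoint.smul ?_ hS
      simp [IsSelfAdjoint]
    have := aux_fwd_sa hΛ hξm hξnorm U hU M hMform hext _ hsa
      (by rw [norm_smul]; simp [hpos.ne']) (by
        filter_upwards [hSξ] with p hp
        rw [_root_.smul_apply, inner_smul_right, hp, mul_zero]) v w hv hw
    rw [_root_.smul_apply, inner_smul_right] at this
    refine (mul_eq_zero.1 this).resolve_left ?_
    simpa using h0
  have hadj : ∀ᵐ p ∂(volume.restrict Λ), ⟪ξ p, ContinuousLinearMap.adjoint A (ξ p)⟫ = 0 := by
    filter_upwards [hA3] with p hp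
    rw [ContinuousLinearMap.adjoint_inner_right, ← inner_conj_symm, hp, map_zero]
  have h1 := gen (A + ContinuousLinearMap.adjoint A) (by
      rw [← ContinuousLinearMap.star_eq_adjoint]; exact IsSelfAdjoint.add_star_self A) (by
      filter_upwards [hA3, hadj] with p h1 h2
      rw [_root_.add_apply, inner_add_right, h1, h2, add_zero])
  have h2 := gen (Complex.I • (A - ContinuousLinearMap.adjoint A)) (by
      rw [← ContinuousLinearMap.star_eq_adjoint, IsSelfAdjoint, star_smul, star_sub, star_star]
      simp [← smul_neg]) (by
      filter_upwards [hA3, hadj] with p h1 h2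
      rw [_root_.smul_apply, inner_smul_right, _root_.sub_apply, inner_sub_right, h1, h2, sub_zero,
        mul_zero])
  have h3 : ∀ v w : ell2, v ∈ genSubspace n Λ ξ → w ∈ genSubspace n Λ ξ → ⟪v, A w⟫ = 0 := by
    intro v w hv hw
    have e1 := h1 v w hv hw
    have e2 := h2 v w hv hw
    rw [_root_.add_apply, inner_add_right] at e1
    rw [_root_.smul_apply, inner_smul_right, _root_.sub_apply, inner_sub_right] at e2
    have e3 := (mul_eq_zero.1 e2).resolve_left Complex.I_ne_zero
    linear_combination (e1 + e3) / 2
  ext1 v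
  obtain ⟨a, ha, b, hb, rfl⟩ := (genSubspace n Λ ξ).exists_add_mem_mem_orthogonal v
  rw [map_add, hA2 b hb, add_zero]
  have := h3 (A a) a (hA1 a) ha
  simpa using this

end five

section six

theorem aux_CS {H : Type*} [NormedAddCommGroup H] [InnerProductSpace ℂ H] [CompleteSpace H]
    (T : H →L[ℂ] H) (hT : T.IsPositive) (x y : H) :
    ‖⟪x, T y⟫‖ ^ 2 ≤ RCLike.re ⟪x, T x⟫ * RCLike.re ⟪y, T y⟫ := by
  let core : PreInnerProductSpace.Core ℂ H :=
    { inner := fun x y => ⟪x, T y⟫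
      conj_inner_symm := by
        intro x y
        change conj ⟪y, T x⟫ = ⟪x, T y⟫
        rw [inner_conj_symm]
        exact hT.isSymmetric x y
      re_inner_nonneg := fun x => hT.re_inner_nonneg_right x
      add_left := fun x y z => inner_add_left _ _ _
      smul_left := fun x y r => inner_smul_left _ _ _ }
  have h := @InnerProductSpace.Core.inner_mul_inner_self_le ℂ H _ _ _ core x y
  have h2 : ‖⟪x, T y⟫‖ * ‖⟪y, T x⟫‖ ≤ RCLike.re ⟪x, T x⟫ * RCLike.re ⟪y, T y⟫ := h
  have h3 : ⟪y, T x⟫ = conj ⟪x, T y⟫ := by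
    rw [inner_conj_symm]
    exact (hT.isSymmetric y x).symm
  rw [h3, RCLike.norm_conj, ← sq] at h2
  exact h2

theorem aux_sesq {V K : Type*} [AddCommGroup V] [Module ℂ V] [NormedAddCommGroup K]
    [InnerProductSpace ℂ K] [CompleteSpace K] (J : V →ₗ[ℂ] K) (hJ : DenseRange J)
    (a : V →ₗ⋆[ℂ] V →ₗ[ℂ] ℂ) (C : ℝ) (hC : ∀ φ ψ, ‖a φ ψ‖ ≤ C * ‖J φ‖ * ‖J ψ‖) (hC0 : 0 ≤ C) :
    ∃ A : K →L[ℂ] K, ∀ φ ψ, ⟪J φ, A (J ψ)⟫ = a φ ψ := by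
  have e1 : ∀ φ ψ, (a φ).extendOfNorm J (J ψ) = a φ ψ := fun φ ψ =>
    LinearMap.extendOfNorm_eq hJ ⟨C * ‖J φ‖, hC φ⟩ ψ
  have hext : ∀ f g : K →L[ℂ] ℂ, (∀ ψ, f (J ψ) = g (J ψ)) → f = g := by
    intro f g h
    have := hJ.equalizer f.continuous g.continuous (funext h)
    exact ContinuousLinearMap.ext (congrFun this)
  let b : V →ₗ⋆[ℂ] (K →L[ℂ] ℂ) :=
    { toFun := fun φ => (a φ).extendOfNorm J
      map_add' := by
        intro x y
        apply hext
        intro ψ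
        rw [_root_.add_apply, e1, e1, e1, map_add]
        rfl
      map_smul' := by
        intro c x
        apply hext
        intro ψ
        rw [_root_.smul_apply, e1, e1, LinearMap.map_smulₛₗ]
        rfl }
  have hb : ∀ φ, ‖b φ‖ ≤ C * ‖J φ‖ := fun φ =>
    LinearMap.opNorm_extendOfNorm_le hJ (by positivity) (hC φ)
  have e2 : ∀ φ, b.extendOfNorm J (J φ) = b φ := fun φ =>
    LinearMap.extendOfNorm_eq hJ ⟨C, hb⟩ φ
  refine ⟨ContinuousLinearMap.adjoint
    (InnerProductSpace.continuousLinearMapOfBilin (b.extendOfNorm J)), fun φ ψ => ?_⟩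
  rw [ContinuousLinearMap.adjoint_inner_right,
    InnerProductSpace.continuousLinearMapOfBilin_apply, e2]
  exact e1 φ ψ

theorem aux_avg {n : ℕ} (f : (Fin n → ℝ) → ℝ) (hf : Continuous f) (x : Fin n → ℝ) :
    Filter.Tendsto (fun r : ℝ => (∫ y in Metric.closedBall x r, f y) /
      volume.real (Metric.closedBall x r)) (nhdsWithin 0 (Ioi 0)) (nhds (f x)) := by
  have hs : Filter.Tendsto (fun r : ℝ => Metric.closedBall x r) (nhdsWithin 0 (Ioi 0))
      (nhds x).smallSets := by
    refine Filter.tendsto_smallSets_iff.2 ?_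
    intro t ht
    obtain ⟨ε, hε, hb⟩ := Metric.nhds_basis_closedBall.mem_iff.1 ht
    have : ∀ᶠ r : ℝ in nhdsWithin 0 (Ioi 0), r ≤ ε :=
      nhdsWithin_le_nhds (Iic_mem_nhds hε)
    filter_upwards [this] with r hr
    exact (Metric.closedBall_subset_closedBall hr).trans hb
  have h := hf.continuousAt.integral_sub_linear_isLittleO_ae (μ := volume) (x := x)
    (hf.stronglyMeasurableAtFilter _ _) hs
  have h2 := h.tendsto_div_nhds_zero
  have h3 : Filter.Tendsto (fun r : ℝ => ((∫ y in Metric.closedBall x r, f y) -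
      volume.real (Metric.closedBall x r) • f x) /
    volume.real (Metric.closedBall x r) + f x) (nhdsWithin 0 (Ioi 0)) (nhds (0 + f x)) :=
    h2.add_const _
  rw [zero_add] at h3
  refine h3.congr' ?_
  filter_upwards [self_mem_nhdsWithin] with r hr
  have hpos : 0 < volume.real (Metric.closedBall x r) :=
    ENNReal.toReal_pos (Metric.measure_closedBall_pos volume x hr).ne' measure_closedBall_lt_top.ne
  rw [smul_eq_mul]
  field_simp
  ring

end six

section seven
variable {n : ℕ} {Λ : Set (Fin n → ℝ)} {ξ : (Fin n → ℝ) → ell2}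

theorem aux_vol_pos (x : Fin n → ℝ) {r : ℝ} (hr : 0 < r) :
    0 < volume.real (Metric.closedBall x r) :=
  ENNReal.toReal_pos (Metric.measure_closedBall_pos volume x hr).ne' measure_closedBall_lt_top.ne

theorem aux_M_re (hξm : StronglyMeasurable ξ)
    (hξnorm : ∀ᵐ p ∂(volume.restrict Λ), ‖ξ p‖ = 1)
    (M : POVM (Fin n → ℝ) (Lp ℂ 2 (volume.restrict Λ))) (hMform : MatrixFormula n Λ ξ M)
    {φ : Lp ℂ 2 (volume.restrict Λ)} (hφ : φ ∈ DD (volume.restrict Λ))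
    {B : Set (Fin n → ℝ)} (hB : MeasurableSet B) :
    RCLike.re ⟪φ, M.toFun B φ⟫ = ((2 * Real.pi) ^ n)⁻¹ *
      ∫ x in B, ‖TT (volume.restrict Λ) ξ φ x‖ ^ 2 := by
  rw [aux_MF hξm hξnorm M hMform hφ hφ hB]
  have : ∀ x, ⟪TT (volume.restrict Λ) ξ φ x, TT (volume.restrict Λ) ξ φ x⟫ =
      ((‖TT (volume.restrict Λ) ξ φ x‖ ^ 2 : ℝ) : ℂ) := by
    intro x
    rw [inner_self_eq_norm_sq_to_K]
    push_cast
    rfl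
  simp only [this]
  rw [integral_complex_ofReal, ← Complex.ofReal_inv, ← Complex.ofReal_mul]
  exact Complex.ofReal_re _

/-- Normalised matrix elements on small balls. -/
noncomputable def Fr (N : POVM (Fin n → ℝ) (Lp ℂ 2 (volume.restrict Λ)))
    (φ ψ : Lp ℂ 2 (volume.restrict Λ)) (r : ℝ) : ℂ :=
  ⟪φ, N.toFun (Metric.closedBall 0 r) ψ⟫ / ((volume.real (Metric.closedBall (0 : Fin n → ℝ) r) : ℝ) : ℂ)

theorem aux_Fr_lim (hξm : StronglyMeasurable ξ)
    (hξnorm : ∀ᵐ p ∂(volume.restrict Λ), ‖ξ p‖ = 1)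
    (M N : POVM (Fin n → ℝ) (Lp ℂ 2 (volume.restrict Λ))) (hMform : MatrixFormula n Λ ξ M)
    (s : ℝ) (hs : 0 ≤ s)
    (hle : ∀ B, MeasurableSet B → ∀ φ, RCLike.re ⟪φ, N.toFun B φ⟫ ≤ s * RCLike.re ⟪φ, M.toFun B φ⟫)
    (G : Ultrafilter ℝ) (hG : (G : Filter ℝ) ≤ nhdsWithin 0 (Ioi 0))
    {φ ψ : Lp ℂ 2 (volume.restrict Λ)} (hφ : φ ∈ DD (volume.restrict Λ))
    (hψ : ψ ∈ DD (volume.restrict Λ)) :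
    ∃ z : ℂ, Filter.Tendsto (Fr N φ ψ) G (nhds z) ∧
      ‖z‖ ≤ (s * ((2 * Real.pi) ^ n)⁻¹) * ‖TT (volume.restrict Λ) ξ φ 0‖ *
        ‖TT (volume.restrict Λ) ξ ψ 0‖ := by
  have hcont : ∀ φ ∈ DD (volume.restrict Λ), Filter.Tendsto (fun r : ℝ =>
      (s * ((2 * Real.pi) ^ n)⁻¹) * ((∫ x in Metric.closedBall (0 : Fin n → ℝ) r,
        ‖TT (volume.restrict Λ) ξ φ x‖ ^ 2) / volume.real (Metric.closedBall (0 : Fin n → ℝ) r)))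
      G (nhds ((s * ((2 * Real.pi) ^ n)⁻¹) * ‖TT (volume.restrict Λ) ξ φ 0‖ ^ 2)) := by
    intro φ hφ
    exact ((aux_avg _ ((aux_TT_cont hξm hξnorm hφ).norm.pow 2) 0).mono_left hG).const_mul _
  set c := (s * ((2 * Real.pi) ^ n)⁻¹) with hc
  have hc0 : 0 ≤ c := by positivity
  set a := ‖TT (volume.restrict Λ) ξ φ 0‖
  set b := ‖TT (volume.restrict Λ) ξ ψ 0‖
  have hsq := ((hcont φ hφ).mul (hcont ψ hψ)).sqrt
  have hlim : √(c * a ^ 2 * (c * b ^ 2)) = c * a * b := by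
    rw [show c * a ^ 2 * (c * b ^ 2) = (c * a * b) ^ 2 by ring]
    exact Real.sqrt_sq (by positivity)
  rw [hlim] at hsq
  have hpos : ∀ᶠ r : ℝ in G, 0 < r := hG self_mem_nhdsWithin
  have hbd : ∀ᶠ r : ℝ in G, ‖Fr N φ ψ r‖ ≤ √((c * ((∫ x in Metric.closedBall (0 : Fin n → ℝ) r,
        ‖TT (volume.restrict Λ) ξ φ x‖ ^ 2) / volume.real (Metric.closedBall (0 : Fin n → ℝ) r))) *
        (c * ((∫ x in Metric.closedBall (0 : Fin n → ℝ) r,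
        ‖TT (volume.restrict Λ) ξ ψ x‖ ^ 2) / volume.real (Metric.closedBall (0 : Fin n → ℝ) r)))) := by
    filter_upwards [hpos] with r hr
    apply Real.le_sqrt_of_sq_le
    have hv := aux_vol_pos (0 : Fin n → ℝ) hr
    have hBm : MeasurableSet (Metric.closedBall (0 : Fin n → ℝ) r) := measurableSet_closedBall
    have h1 := aux_CS _ (N.isPositive _ hBm) φ ψ
    have h2 := hle _ hBm φ
    have h3 := hle _ hBm ψ
    rw [aux_M_re hξm hξnorm M hMform hφ hBm, ← mul_assoc, ← hc] at h2
    rw [aux_M_re hξm hξnorm M hMform hψ hBm, ← mul_assoc, ← hc] at h3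
    have h4 : RCLike.re ⟪ψ, N.toFun (Metric.closedBall 0 r) ψ⟫ ≥ 0 :=
      (N.isPositive _ hBm).re_inner_nonneg_right _
    have h5 : RCLike.re ⟪φ, N.toFun (Metric.closedBall 0 r) φ⟫ ≥ 0 :=
      (N.isPositive _ hBm).re_inner_nonneg_right _
    have h6 := h1.trans (mul_le_mul h2 h3 h4 (h5.trans h2))
    rw [Fr, norm_div, div_pow, Complex.norm_real, Real.norm_of_nonneg hv.le, div_le_iff₀ (by positivity)]
    refine h6.trans (le_of_eq ?_)
    field_simp
  have hK : IsCompact (Metric.closedBall (0 : ℂ) (c * a * b + 1)) := isCompact_closedBall _ _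
  have hmem : ∀ᶠ r in G, Fr N φ ψ r ∈ Metric.closedBall (0 : ℂ) (c * a * b + 1) := by
    filter_upwards [hbd, hsq.eventually (Iic_mem_nhds (lt_add_one (c * a * b)))] with r h1 h2
    rw [mem_closedBall_zero_iff]
    exact h1.trans h2
  obtain ⟨z, -, hz⟩ := hK.ultrafilter_le_nhds (G.map (Fr N φ ψ)) (Filter.le_principal_iff.2 hmem)
  refine ⟨z, hz, ?_⟩
  exact le_of_tendsto_of_tendsto (Filter.Tendsto.norm hz) hsq hbd

theorem aux_limit_op (hξm : StronglyMeasurable ξ)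
    (hξnorm : ∀ᵐ p ∂(volume.restrict Λ), ‖ξ p‖ = 1)
    (M N : POVM (Fin n → ℝ) (Lp ℂ 2 (volume.restrict Λ))) (hMform : MatrixFormula n Λ ξ M)
    (s : ℝ) (hs : 0 ≤ s)
    (hle : ∀ B, MeasurableSet B → ∀ φ, RCLike.re ⟪φ, N.toFun B φ⟫ ≤ s * RCLike.re ⟪φ, M.toFun B φ⟫)
    (G : Ultrafilter ℝ) (hG : (G : Filter ℝ) ≤ nhdsWithin 0 (Ioi 0)) :
    ∃ A : ell2 →L[ℂ] ell2, (∀ v, A v ∈ genSubspace n Λ ξ) ∧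
      (∀ v ∈ (genSubspace n Λ ξ)ᗮ, A v = 0) ∧
      ∀ φ ∈ DD (volume.restrict Λ), ∀ ψ ∈ DD (volume.restrict Λ),
        Filter.Tendsto (Fr N φ ψ) G
          (nhds ⟪TT (volume.restrict Λ) ξ φ 0, A (TT (volume.restrict Λ) ξ ψ 0)⟫) := by
  have hcl : IsClosed (genSubspace n Λ ξ : Set ell2) := Submodule.isClosed_topologicalClosure _
  have : CompleteSpace (genSubspace n Λ ξ) := hcl.completeSpace_coe
  have hex := fun φ ψ : DD (volume.restrict Λ) =>
    aux_Fr_lim hξm hξnorm M N hMform s hs hle G hG φ.2 ψ.2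
  choose a ha hb using hex
  let a' : DD (volume.restrict Λ) →ₗ⋆[ℂ] DD (volume.restrict Λ) →ₗ[ℂ] ℂ :=
    LinearMap.mk₂'ₛₗ (starRingEnd ℂ) (RingHom.id ℂ) a
      (by
        intro x y z
        refine tendsto_nhds_unique (ha (x + y) z) (((ha x z).add (ha y z)).congr fun r => ?_)
        simp only [Fr, Submodule.coe_add, inner_add_left, add_div])
      (by
        intro c x z
        refine tendsto_nhds_unique (ha (c • x) z) (((ha x z).const_mul (conj c)).congr fun r => ?_)
        simp only [Fr, Submodule.coe_smul, inner_smul_left, mul_div_assoc])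
      (by
        intro x y z
        refine tendsto_nhds_unique (ha x (y + z)) (((ha x y).add (ha x z)).congr fun r => ?_)
        simp only [Fr, Submodule.coe_add, map_add, inner_add_right, add_div])
      (by
        intro c x z
        refine tendsto_nhds_unique (ha x (c • z)) (((ha x z).const_mul c).congr fun r => ?_)
        simp only [Fr, Submodule.coe_smul, map_smul, inner_smul_right, mul_div_assoc])
  obtain ⟨A, hA⟩ := aux_sesq (JJ hξm hξnorm) (aux_JJ_dense hξm hξnorm) a'
    (s * ((2 * Real.pi) ^ n)⁻¹) (fun φ ψ => hb φ ψ) (by positivity)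
  refine ⟨(genSubspace n Λ ξ).subtypeL ∘L A ∘L (genSubspace n Λ ξ).orthogonalProjectionOnto, ?_, ?_, ?_⟩
  · intro v
    exact (A _).2
  · intro v hv
    simp [Submodule.orthogonalProjectionOnto_apply_of_mem_orthogonal hv]
  · intro φ hφ ψ hψ
    convert ha ⟨φ, hφ⟩ ⟨ψ, hψ⟩ using 2
    refine Eq.trans ?_ (hA ⟨φ, hφ⟩ ⟨ψ, hψ⟩)
    have hp : (genSubspace n Λ ξ).orthogonalProjectionOnto (TT (volume.restrict Λ) ξ ψ 0) =
        JJ hξm hξnorm ⟨ψ, hψ⟩ :=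
      Submodule.orthogonalProjectionOnto_mem_subspace_eq_self (JJ hξm hξnorm ⟨ψ, hψ⟩)
    simp only [ContinuousLinearMap.comp_apply]
    rw [hp]
    rfl

end seven

section eight
variable {n : ℕ} {Λ : Set (Fin n → ℝ)} {ξ : (Fin n → ℝ) → ell2}

theorem aux_N_real (N : POVM (Fin n → ℝ) (Lp ℂ 2 (volume.restrict Λ)))
    (φ : Lp ℂ 2 (volume.restrict Λ)) {B : Set (Fin n → ℝ)} (hB : MeasurableSet B) :
    ⟪φ, N.toFun B φ⟫ = (((⟪φ, N.toFun B φ⟫).re : ℝ) : ℂ) := by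
  have := (N.isPositive B hB).inner_nonneg_right φ
  rw [Complex.le_def] at this
  apply Complex.ext <;> simp
  exact this.2.symm

theorem aux_N_nonneg (N : POVM (Fin n → ℝ) (Lp ℂ 2 (volume.restrict Λ)))
    (φ : Lp ℂ 2 (volume.restrict Λ)) {B : Set (Fin n → ℝ)} (hB : MeasurableSet B) :
    0 ≤ (⟪φ, N.toFun B φ⟫).re :=
  (N.isPositive B hB).re_inner_nonneg_right φ

/-- The diagonal measure. -/
noncomputable def nu (N : POVM (Fin n → ℝ) (Lp ℂ 2 (volume.restrict Λ)))
    (φ : Lp ℂ 2 (volume.restrict Λ)) : Measure (Fin n → ℝ) :=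
  Measure.ofMeasurable (fun B _ => ENNReal.ofReal (⟪φ, N.toFun B φ⟫).re)
    (by
      have h := N.m_iUnion (fun _ => ∅) (fun _ => MeasurableSet.empty)
        (fun _ _ _ => disjoint_bot_left) φ φ
      have h2 := (summable_const_iff _).1 h.summable
      simp [h2])
    (by
      intro f hf hd
      have h := Complex.hasSum_re (N.m_iUnion f hf hd φ φ)
      rw [← h.tsum_eq]
      exact ENNReal.ofReal_tsum_of_nonneg (fun i => aux_N_nonneg N φ (hf i)) h.summable)

theorem aux_nu (N : POVM (Fin n → ℝ) (Lp ℂ 2 (volume.restrict Λ)))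
    (φ : Lp ℂ 2 (volume.restrict Λ)) {B : Set (Fin n → ℝ)} (hB : MeasurableSet B) :
    nu N φ B = ENNReal.ofReal (⟪φ, N.toFun B φ⟫).re :=
  Measure.ofMeasurable_apply B hB

theorem aux_ball_cov
    (U : (Fin n → ℝ) →
      (Lp ℂ 2 (volume.restrict Λ) ≃ₗᵢ[ℂ] Lp ℂ 2 (volume.restrict Λ)))
    (N : POVM (Fin n → ℝ) (Lp ℂ 2 (volume.restrict Λ))) (hN : IsCovariantPos n Λ U N)
    (φ : Lp ℂ 2 (volume.restrict Λ)) (x : Fin n → ℝ) (r : ℝ) :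
    ⟪φ, N.toFun (Metric.closedBall x r) φ⟫ =
      ⟪U (-x) φ, N.toFun (Metric.closedBall 0 r) (U (-x) φ)⟫ := by
  rw [← hN (-x) (Metric.closedBall x r) measurableSet_closedBall φ φ]
  have : (fun y => y + -x) '' Metric.closedBall x r = Metric.closedBall 0 r := by
    rw [image_add_right]
    ext y
    simp [Metric.mem_closedBall, dist_eq_norm]
  rw [this]

theorem aux_rep (hΛ : MeasurableSet Λ) (hξm : StronglyMeasurable ξ)
    (hξnorm : ∀ᵐ p ∂(volume.restrict Λ), ‖ξ p‖ = 1)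
    (U : (Fin n → ℝ) →
      (Lp ℂ 2 (volume.restrict Λ) ≃ₗᵢ[ℂ] Lp ℂ 2 (volume.restrict Λ)))
    (hU : ∀ q : Fin n → ℝ, ∀ φ : Lp ℂ 2 (volume.restrict Λ),
      (U q φ : (Fin n → ℝ) → ℂ) =ᵐ[volume.restrict Λ]
        fun p => Complex.exp (Complex.I * (∑ k, q k * p k)) * φ p)
    (M N : POVM (Fin n → ℝ) (Lp ℂ 2 (volume.restrict Λ))) (hMform : MatrixFormula n Λ ξ M)
    (hN : IsCovariantPos n Λ U N)
    (s : ℝ) (hs : 0 ≤ s)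
    (hle : ∀ B, MeasurableSet B → ∀ φ, RCLike.re ⟪φ, N.toFun B φ⟫ ≤ s * RCLike.re ⟪φ, M.toFun B φ⟫) :
    ∃ A : ell2 →L[ℂ] ell2, (∀ v, A v ∈ genSubspace n Λ ξ) ∧
      (∀ v ∈ (genSubspace n Λ ξ)ᗮ, A v = 0) ∧
      ∀ φ ∈ DD (volume.restrict Λ), ∀ B, MeasurableSet B →
        ⟪φ, N.toFun B φ⟫ =
          ∫ x in B, ⟪TT (volume.restrict Λ) ξ φ x, A (TT (volume.restrict Λ) ξ φ x)⟫ := by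
  set G : Ultrafilter ℝ := Ultrafilter.of (nhdsWithin 0 (Ioi 0))
  have hG : (G : Filter ℝ) ≤ nhdsWithin 0 (Ioi 0) := Ultrafilter.of_le _
  obtain ⟨A, hA1, hA2, hA3⟩ := aux_limit_op hξm hξnorm M N hMform s hs hle G hG
  refine ⟨A, hA1, hA2, fun φ hφ B hB => ?_⟩
  have hpos : ∀ᶠ r : ℝ in G, 0 < r := hG self_mem_nhdsWithin
  have hlim : ∀ x, Filter.Tendsto (Fr N (U (-x) φ) (U (-x) φ)) G
      (nhds ⟪TT (volume.restrict Λ) ξ φ x, A (TT (volume.restrict Λ) ξ φ x)⟫) := by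
    intro x
    have hm := aux_U_int (hU (-x) φ) hφ
    have := hA3 _ hm _ hm
    rwa [aux_TT_U (hU (-x) φ), zero_sub, neg_neg] at this
  have hFr : ∀ x r, Fr N (U (-x) φ) (U (-x) φ) r =
      (((⟪φ, N.toFun (Metric.closedBall x r) φ⟫).re / volume.real (Metric.closedBall x r) : ℝ) : ℂ) := by
    intro x r
    rw [Fr, ← aux_ball_cov U N hN, aux_N_real N φ measurableSet_closedBall]
    push_cast
    congr 2
    simp only [Measure.real]
    rw [Measure.addHaar_closedBall_center volume x]
  set g : (Fin n → ℝ) → ℝ := fun x =>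
    (⟪TT (volume.restrict Λ) ξ φ x, A (TT (volume.restrict Λ) ξ φ x)⟫).re with hg
  have hlimre : ∀ x, Filter.Tendsto (fun r => (⟪φ, N.toFun (Metric.closedBall x r) φ⟫).re /
      volume.real (Metric.closedBall x r)) G (nhds (g x)) := by
    intro x
    have := (Complex.continuous_re.tendsto _).comp (hlim x)
    refine this.congr fun r => ?_
    simp only [Function.comp, hFr, Complex.ofReal_re]
  have him : ∀ x, (⟪TT (volume.restrict Λ) ξ φ x, A (TT (volume.restrict Λ) ξ φ x)⟫).im = 0 := by
    intro x
    have := (Complex.continuous_im.tendsto _).comp (hlim x)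
    refine tendsto_nhds_unique this ?_
    refine tendsto_const_nhds.congr fun r => ?_
    simp only [Function.comp, hFr, Complex.ofReal_im]
  have hgc : ∀ x, ⟪TT (volume.restrict Λ) ξ φ x, A (TT (volume.restrict Λ) ξ φ x)⟫ = ((g x : ℝ) : ℂ) := by
    intro x
    apply Complex.ext
    · simp [hg]
    · rw [him]; simp
  have hg0 : ∀ x, 0 ≤ g x := by
    intro x
    refine ge_of_tendsto' (hlimre x) fun r => ?_
    exact div_nonneg (aux_N_nonneg N φ measurableSet_closedBall) measureReal_nonneg
  have hgi : Integrable g := (aux_PL hΛ hξm hξnorm hφ hφ (Lp.memLp _) (Lp.memLp _) A).2.1.re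
  have hfin : IsFiniteMeasure (nu N φ) := ⟨by rw [aux_nu N φ MeasurableSet.univ]; exact ENNReal.ofReal_lt_top⟩
  have hac : nu N φ ≪ volume := by
    refine Measure.AbsolutelyContinuous.mk fun C hC h0 => ?_
    rw [aux_nu N φ hC]
    have h1 := hle C hC φ
    rw [aux_M_re hξm hξnorm M hMform hφ hC, Measure.restrict_eq_zero.2 h0, integral_zero_measure,
      mul_zero, mul_zero] at h1
    exact ENNReal.ofReal_of_nonpos h1
  have hrn : (nu N φ).rnDeriv volume =ᵐ[volume] fun x => ENNReal.ofReal (g x) := by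
    filter_upwards [Besicovitch.ae_tendsto_rnDeriv (nu N φ) volume] with x hx
    refine tendsto_nhds_unique (hx.mono_left hG) ?_
    refine (ENNReal.tendsto_ofReal (hlimre x)).congr' ?_
    filter_upwards [hpos] with r hr
    rw [aux_nu N φ measurableSet_closedBall, ENNReal.ofReal_div_of_pos (aux_vol_pos x hr),
      Measure.real, ENNReal.ofReal_toReal measure_closedBall_lt_top.ne]
  have hν : nu N φ B = ENNReal.ofReal (∫ x in B, g x) := by
    rw [← Measure.withDensity_rnDeriv_eq _ _ hac, withDensity_apply _ hB,
      ofReal_integral_eq_lintegral_ofReal hgi.integrableOn (Filter.Eventually.of_forall hg0)]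
    exact lintegral_congr_ae (ae_restrict_of_ae hrn)
  rw [aux_nu N φ hB, ENNReal.ofReal_eq_ofReal_iff (aux_N_nonneg N φ hB)
    (integral_nonneg hg0)] at hν
  simp only [hgc]
  rw [integral_complex_ofReal, ← hν]
  exact aux_N_real N φ hB

theorem aux_bwd (hΛ : MeasurableSet Λ) (hξm : StronglyMeasurable ξ)
    (hξnorm : ∀ᵐ p ∂(volume.restrict Λ), ‖ξ p‖ = 1)
    (U : (Fin n → ℝ) →
      (Lp ℂ 2 (volume.restrict Λ) ≃ₗᵢ[ℂ] Lp ℂ 2 (volume.restrict Λ)))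
    (hU : ∀ q : Fin n → ℝ, ∀ φ : Lp ℂ 2 (volume.restrict Λ),
      (U q φ : (Fin n → ℝ) → ℂ) =ᵐ[volume.restrict Λ]
        fun p => Complex.exp (Complex.I * (∑ k, q k * p k)) * φ p)
    (M N : POVM (Fin n → ℝ) (Lp ℂ 2 (volume.restrict Λ))) (hMform : MatrixFormula n Λ ξ M)
    (hN : IsCovariantPos n Λ U N)
    (s : ℝ) (hs : 0 ≤ s)
    (hle : ∀ B, MeasurableSet B → ∀ φ, RCLike.re ⟪φ, N.toFun B φ⟫ ≤ s * RCLike.re ⟪φ, M.toFun B φ⟫)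
    (hcond : ∀ A : ell2 →L[ℂ] ell2,
        (∀ v : ell2, A v ∈ genSubspace n Λ ξ) →
        (∀ v ∈ (genSubspace n Λ ξ)ᗮ, A v = 0) →
        (∀ᵐ p ∂(volume.restrict Λ), ⟪ξ p, A (ξ p)⟫ = 0) →
        A = 0) (B : Set (Fin n → ℝ)) (hB : MeasurableSet B) : N.toFun B = M.toFun B := by
  have hcl : IsClosed (genSubspace n Λ ξ : Set ell2) := Submodule.isClosed_topologicalClosure _
  have : CompleteSpace (genSubspace n Λ ξ) := hcl.completeSpace_coe
  obtain ⟨A, hA1, hA2, hA3⟩ := aux_rep hΛ hξm hξnorm U hU M N hMform hN s hs hle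
  set c : ℂ := (((2 * Real.pi) ^ n : ℝ) : ℂ) with hcdef
  have hc : c ≠ 0 := by
    have : (2 * Real.pi) ^ n ≠ 0 := by positivity
    rw [hcdef]
    exact_mod_cast this
  have hmeasA : AEStronglyMeasurable (fun p => c * ⟪ξ p, A (ξ p)⟫ - 1) (volume.restrict Λ) := by
    refine AEStronglyMeasurable.sub ?_ aestronglyMeasurable_const
    refine AEStronglyMeasurable.const_mul ?_ c
    exact hξm.aestronglyMeasurable.inner (A.continuous.comp_aestronglyMeasurable hξm.aestronglyMeasurable)
  have hbnd : ∀ᵐ p ∂(volume.restrict Λ), ‖⟪ξ p, A (ξ p)⟫‖ ≤ ‖A‖ := by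
    filter_upwards [hξnorm] with p hp
    refine (norm_inner_le_norm _ _).trans ?_
    rw [hp, one_mul]
    have := A.le_opNorm (ξ p)
    rwa [hp, mul_one] at this
  have hae : ∀ᵐ p ∂(volume.restrict Λ), c * ⟪ξ p, A (ξ p)⟫ - 1 = 0 := by
    have hio : ∀ t, MeasurableSet t → (volume.restrict Λ) t < ⊤ →
        IntegrableOn (fun p => ⟪ξ p, A (ξ p)⟫) t (volume.restrict Λ) := by
      intro t ht hfin
      have : IsFiniteMeasure ((volume.restrict Λ).restrict t) := ⟨by simpa using hfin⟩
      refine (integrable_const ‖A‖).mono' ?_ (ae_restrict_of_ae hbnd)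
      exact hξm.aestronglyMeasurable.inner (A.continuous.comp_aestronglyMeasurable hξm.aestronglyMeasurable)
    refine ae_eq_zero_of_forall_setIntegral_eq_of_sigmaFinite ?_ ?_
    · intro t ht hfin
      exact ((hio t ht hfin).const_mul c).sub (integrableOn_const hfin.ne)
    · intro t ht hfin
      have h2 : MemLp (t.indicator (fun _ => (1 : ℂ))) 2 (volume.restrict Λ) :=
        memLp_indicator_const 2 ht 1 (Or.inr hfin.ne)
      have h1 : Integrable (t.indicator (fun _ => (1 : ℂ))) (volume.restrict Λ) :=
        (integrable_indicator_iff ht).2 (integrableOn_const hfin.ne)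
      have hm := aux_toLp_mem_DD h1 h2
      have e1 := hA3 _ hm univ MeasurableSet.univ
      rw [N.normalized, Measure.restrict_univ,
        (aux_PL hΛ hξm hξnorm hm hm (Lp.memLp _) (Lp.memLp _) A).2.2,
        show (1 : Lp ℂ 2 (volume.restrict Λ) →L[ℂ] Lp ℂ 2 (volume.restrict Λ)) (h2.toLp _) = h2.toLp _
          from rfl, L2.inner_def, ← hcdef] at e1
      have e2 : ∫ p, ⟪(h2.toLp _) p, (h2.toLp _) p⟫ ∂(volume.restrict Λ) =
          ∫ p in t, (1 : ℂ) ∂(volume.restrict Λ) := by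
        rw [← integral_indicator ht]
        apply integral_congr_ae
        filter_upwards [h2.coeFn_toLp] with p hp
        rw [hp]
        by_cases hpt : p ∈ t <;> simp [hpt]
      have e3 : ∫ p, conj ((h2.toLp _) p) * (h2.toLp _) p * ⟪ξ p, A (ξ p)⟫ ∂(volume.restrict Λ) =
          ∫ p in t, ⟪ξ p, A (ξ p)⟫ ∂(volume.restrict Λ) := by
        rw [← integral_indicator ht]
        apply integral_congr_ae
        filter_upwards [h2.coeFn_toLp] with p hp
        rw [hp]
        by_cases hpt : p ∈ t <;> simp [hpt]
      rw [e2, e3] at e1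
      rw [integral_sub ((hio t ht hfin).const_mul c) (integrableOn_const hfin.ne), e1,
        integral_const_mul, sub_self]
  set P := (genSubspace n Λ ξ).starProjection with hP
  have hzero : c • A - P = 0 := by
    refine hcond _ ?_ ?_ ?_
    · intro v
      exact Submodule.sub_mem _ (Submodule.smul_mem _ _ (hA1 v)) (Submodule.starProjection_apply_mem _ v)
    · intro v hv
      rw [_root_.sub_apply, _root_.smul_apply, hA2 v hv, smul_zero, zero_sub, neg_eq_zero, hP]
      exact (Submodule.starProjection_apply_eq_zero_iff _).2 hv
    · filter_upwards [hae, aux_xi_mem hξm hξnorm, hξnorm] with p h1 h2 h3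
      have h4 : P (ξ p) = ξ p := Submodule.starProjection_eq_self_iff.2 h2
      rw [_root_.sub_apply, _root_.smul_apply, h4, inner_sub_right, inner_smul_right,
        inner_self_eq_norm_sq_to_K, h3]
      simpa using h1
  have hAP : ∀ v, A v = c⁻¹ • P v := by
    intro v
    have := congrArg (fun T : ell2 →L[ℂ] ell2 => T v) hzero
    simp only [_root_.sub_apply, _root_.smul_apply, _root_.zero_apply, sub_eq_zero] at this
    rw [← this, smul_smul, inv_mul_cancel₀ hc, one_smul]
  have hTm : ∀ φ ∈ DD (volume.restrict Λ), ∀ x, TT (volume.restrict Λ) ξ φ x ∈ genSubspace n Λ ξ := by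
    intro φ hφ x
    have hm := aux_U_int (hU (-x) φ) hφ
    have := aux_gen_mem (ξ := ξ) hm
    rwa [aux_TT_U (hU (-x) φ), zero_sub, neg_neg] at this
  have hdiag : ∀ φ ∈ DD (volume.restrict Λ), ⟪(N.toFun B - M.toFun B) φ, φ⟫ = 0 := by
    intro φ hφ
    rw [← inner_conj_symm, _root_.sub_apply, inner_sub_right, hA3 φ hφ B hB,
      aux_MF hξm hξnorm M hMform hφ hφ hB, ← integral_const_mul]
    have : ∀ x, ⟪TT (volume.restrict Λ) ξ φ x, A (TT (volume.restrict Λ) ξ φ x)⟫ =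
        c⁻¹ * ⟪TT (volume.restrict Λ) ξ φ x, TT (volume.restrict Λ) ξ φ x⟫ := by
      intro x
      rw [hAP, inner_smul_right, hP, Submodule.starProjection_eq_self_iff.2 (hTm φ hφ x)]
    simp only [this]
    rw [← hcdef, sub_self, map_zero]
  have hall : ∀ φ, ⟪(N.toFun B - M.toFun B) φ, φ⟫ = 0 := by
    intro φ
    have := Continuous.ext_on (aux_DD_dense (μ := volume.restrict Λ))
      (f := fun φ => ⟪(N.toFun B - M.toFun B) φ, φ⟫) (g := fun _ => 0)
      ((ContinuousLinearMap.continuous _).inner continuous_id) continuous_const hdiag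
    exact congrFun this φ
  have := (inner_map_self_eq_zero ((N.toFun B - M.toFun B : Lp ℂ 2 (volume.restrict Λ) →L[ℂ]
    Lp ℂ 2 (volume.restrict Λ)) : Lp ℂ 2 (volume.restrict Λ) →ₗ[ℂ] Lp ℂ 2 (volume.restrict Λ))).1 hall
  rw [← sub_eq_zero]
  ext1 φ
  exact congrArg (fun T : Lp ℂ 2 (volume.restrict Λ) →ₗ[ℂ] Lp ℂ 2 (volume.restrict Λ) => T φ) this

theorem aux_comb (M N N' : POVM (Fin n → ℝ) (Lp ℂ 2 (volume.restrict Λ))) (t u : ℝ) (ht : 0 < t)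
    (hu : 0 ≤ u) {B : Set (Fin n → ℝ)} (hB : MeasurableSet B)
    (h : M.toFun B = (t : ℂ) • N.toFun B + (u : ℂ) • N'.toFun B)
    (φ : Lp ℂ 2 (volume.restrict Λ)) :
    RCLike.re ⟪φ, N.toFun B φ⟫ ≤ t⁻¹ * RCLike.re ⟪φ, M.toFun B φ⟫ := by
  rw [h, _root_.add_apply, _root_.smul_apply, _root_.smul_apply, inner_add_right, inner_smul_right,
    inner_smul_right, map_add]
  have h1 := aux_N_nonneg N' φ hB
  change (⟪φ, N.toFun B φ⟫).re ≤ t⁻¹ * ((_ : ℂ).re + (_ : ℂ).re)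
  rw [Complex.re_ofReal_mul, Complex.re_ofReal_mul, mul_add, inv_mul_cancel_left₀ ht.ne']
  have : 0 ≤ t⁻¹ * (u * (⟪φ, N'.toFun B φ⟫).re) := by positivity
  linarith

end eight

theorem stmt3 (n : ℕ) (hn : 1 ≤ n) (Λ : Set (Fin n → ℝ)) (hΛmeas : MeasurableSet Λ)
    (hΛpos : 0 < volume Λ)
    (U : (Fin n → ℝ) →
      (Lp ℂ 2 (volume.restrict Λ) ≃ₗᵢ[ℂ] Lp ℂ 2 (volume.restrict Λ)))
    (hU : ∀ q : Fin n → ℝ, ∀ φ : Lp ℂ 2 (volume.restrict Λ),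
      (U q φ : (Fin n → ℝ) → ℂ) =ᵐ[volume.restrict Λ]
        fun p => Complex.exp (Complex.I * (∑ k, q k * p k)) * φ p)
    (ξ : (Fin n → ℝ) → ell2)
    (hξmeas : ∀ e : ell2, Measurable fun p => ⟪e, ξ p⟫)
    (hξnorm : ∀ᵐ p ∂(volume.restrict Λ), ‖ξ p‖ = 1)
    (M : POVM (Fin n → ℝ) (Lp ℂ 2 (volume.restrict Λ)))
    (hMcov : IsCovariantPos n Λ U M)
    (hMform : MatrixFormula n Λ ξ M) :
    IsExtremeCovariantPos n Λ U M ↔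
      -- the only bounded operator `A` on `𝐇` (identified with the operators on `ℓ²(ℕ)`
      -- mapping `𝐇` into itself and vanishing on `𝐇ᗮ`) with `⟨ξ(p), A ξ(p)⟩ = 0`
      -- for a.e. `p ∈ Λ` is `A = 0`
      ∀ A : ell2 →L[ℂ] ell2,
        (∀ v : ell2, A v ∈ genSubspace n Λ ξ) →
        (∀ v ∈ (genSubspace n Λ ξ)ᗮ, A v = 0) →
        (∀ᵐ p ∂(volume.restrict Λ), ⟪ξ p, A (ξ p)⟫ = 0) →
        A = 0 := by
  have hξm := aux_xi_sm ξ hξmeas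
  constructor
  · intro hext A hA1 hA2 hA3
    exact aux_fwd hΛmeas hξm hξnorm U hU M hMform hext A hA1 hA2 hA3
  · intro hcond M₁ M₂ h₁ h₂ t ht0 ht1 hcomb B hB
    constructor
    · refine aux_bwd hΛmeas hξm hξnorm U hU M M₁ hMform h₁ t⁻¹ (by positivity) ?_ hcond B hB
      intro C hC φ
      exact aux_comb M M₁ M₂ t (1 - t) ht0 (by linarith) hC (hcomb C hC) φ
    · have ht2 : 0 < 1 - t := by linarith
      refine aux_bwd hΛmeas hξm hξnorm U hU M M₂ hMform h₂ (1 - t)⁻¹ (by positivity) ?_ hcond B hB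
      intro C hC φ
      exact aux_comb M M₂ M₁ (1 - t) t ht2 ht0.le hC ((hcomb C hC).trans (add_comm _ _)) φ
end

section
/- Let n ≥ 1 and let M be a POVM on (ℝⁿ, ℬ(ℝⁿ)) acting on L²(ℝⁿ) that is covariant under position translations, i.e. U(q) M(B) U(q)* = M(B + q) for all q ∈ ℝⁿ and Borel B ⊆ ℝⁿ, and invariant under momentum boosts, i.e. V(p) M(B) V(p)* = M(B) for all p ∈ ℝⁿ and Borel B ⊆ ℝⁿ. Then there exists a Borel probability measure ρ on ℝⁿ such that for all φ, ψ ∈ L²(ℝⁿ) and all Borel B ⊆ ℝⁿ: ⟨φ, M(B)ψ⟩ = ∫_B ∫_{ℝⁿ} conj(φ(x − q)) ψ(x − q) dρ(q) dx; that is, M = ρ ∗ M_κ is the convolution of a probability measure with the canonical position observable. -/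
open MeasureTheory Set
open scoped ComplexConjugate

local notation "⟪" x ", " y "⟫" => @inner ℂ _ _ x y

/-- `L²(ℝⁿ)`. -/
noncomputable abbrev L2Rn (n : ℕ) : Type := Lp ℂ 2 (volume : Measure (Fin n → ℝ))

/-- Covariance under position translations: `U(q) M(B) U(q)* = M(B + q)`. -/
def TransCovariant (n : ℕ) (U : (Fin n → ℝ) → (L2Rn n ≃ₗᵢ[ℂ] L2Rn n))
    (M : POVM (Fin n → ℝ) (L2Rn n)) : Prop :=
  ∀ q : Fin n → ℝ, ∀ B : Set (Fin n → ℝ), MeasurableSet B →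
    ∀ φ ψ : L2Rn n,
      ⟪(U q φ : L2Rn n), M.toFun ((fun x => x + q) '' B) (U q ψ)⟫ = ⟪φ, M.toFun B ψ⟫

/-- Invariance under momentum boosts: `V(p) M(B) V(p)* = M(B)`. -/
def BoostInvariant (n : ℕ) (V : (Fin n → ℝ) → (L2Rn n ≃ₗᵢ[ℂ] L2Rn n))
    (M : POVM (Fin n → ℝ) (L2Rn n)) : Prop :=
  ∀ p : Fin n → ℝ, ∀ B : Set (Fin n → ℝ), MeasurableSet B →
    ∀ φ ψ : L2Rn n,
      ⟪(V p φ : L2Rn n), M.toFun B (V p ψ)⟫ = ⟪φ, M.toFun B ψ⟫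


open Filter Topology ENNReal

theorem levy_exists {E : Type*} [NormedAddCommGroup E] [InnerProductSpace ℝ E]
    [FiniteDimensional ℝ E] [MeasurableSpace E] [BorelSpace E]
    (μ : ℕ → ProbabilityMeasure E) (f : E → ℂ) (hf : ContinuousAt f 0)
    (h : ∀ t, Tendsto (fun n => charFun (μ n : Measure E) t) atTop (𝓝 (f t))) :
    ∃ ρ : ProbabilityMeasure E, ∀ t, charFun (ρ : Measure E) t = f t := by
  have ht := isTightMeasureSet_of_tendsto_charFun (μ := fun n => (μ n : Measure E)) hf h
  have hc : IsCompact (closure (Set.range μ)) := by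
    apply isCompact_closure_of_isTightMeasureSet
    convert ht using 1
    ext x; simp
  obtain ⟨ρ, -, k, hk, hlim⟩ := hc.isSeqCompact (x := μ) (fun n => subset_closure ⟨n, rfl⟩)
  refine ⟨ρ, fun t => ?_⟩
  have h1 := ProbabilityMeasure.tendsto_iff_tendsto_charFun.1 hlim t
  exact tendsto_nhds_unique h1 ((h t).comp hk.tendsto_atTop)

theorem deconv {E : Type*} [NormedAddCommGroup E] [InnerProductSpace ℝ E]
    [FiniteDimensional ℝ E] [MeasurableSpace E] [BorelSpace E]
    (μ ν : ℕ → Measure E) (hμ : ∀ n, IsProbabilityMeasure (μ n))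
    (hν : ∀ n, IsProbabilityMeasure (ν n))
    (hcomm : ∀ i j, Measure.conv (μ i) (ν j) = Measure.conv (μ j) (ν i))
    (hne : ∀ t, charFun (ν 0) t ≠ 0)
    (hlim : ∀ t, Tendsto (fun n => charFun (ν n) t) atTop (𝓝 1)) :
    ∃ ρ : Measure E, IsProbabilityMeasure ρ ∧ ∀ μ' ν' : Measure E, IsFiniteMeasure μ' →
      IsFiniteMeasure ν' → Measure.conv μ' (ν 0) = Measure.conv (μ 0) ν' →
      μ' = Measure.conv ρ ν' := by
  obtain ⟨ρ, hρ⟩ := levy_exists (fun n => ⟨μ n, hμ n⟩)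
    (fun t => charFun (μ 0) t / charFun (ν 0) t) (by
      have h1 : Continuous (charFun (μ 0)) := by fun_prop
      have h2 : Continuous (charFun (ν 0)) := by fun_prop
      exact (h1.div h2 hne).continuousAt) (by
      intro t
      have : ∀ n, charFun (μ n) t = charFun (μ 0) t / charFun (ν 0) t * charFun (ν n) t := by
        intro n
        have := congrArg (fun m => charFun m t) (hcomm n 0)
        simp only [charFun_conv] at this
        rw [div_mul_eq_mul_div, eq_div_iff (hne t), this]
      have h3 := (hlim t).const_mul (charFun (μ 0) t / charFun (ν 0) t)
      rw [mul_one] at h3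
      exact h3.congr (fun n => (this n).symm))
  refine ⟨ρ, inferInstance, fun μ' ν' _ _ h => ?_⟩
  apply Measure.ext_of_charFun
  ext t
  have := congrArg (fun m => charFun m t) h
  simp only [charFun_conv] at this
  rw [charFun_conv, hρ, div_mul_eq_mul_div, eq_div_iff (hne t), this]

/-- Transfer to the space `Fin n → ℝ`. -/
theorem charFun_toLp (n : ℕ) (μ : Measure (Fin n → ℝ)) (t : EuclideanSpace ℝ (Fin n)) :
    charFun (μ.map (MeasurableEquiv.toLp 2 (Fin n → ℝ))) t
      = ∫ x, Complex.exp (Complex.I * ((∑ k, t k * x k : ℝ) : ℂ)) ∂μ := by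
  rw [charFun_apply, integral_map_equiv]
  congr 1
  ext x
  rw [mul_comm]
  congr 3

theorem ext_fourier (n : ℕ) (μ ν : Measure (Fin n → ℝ)) [IsFiniteMeasure μ] [IsFiniteMeasure ν]
    (h : ∀ p : Fin n → ℝ, ∫ x, Complex.exp (Complex.I * ((∑ k, p k * x k : ℝ) : ℂ)) ∂μ
      = ∫ x, Complex.exp (Complex.I * ((∑ k, p k * x k : ℝ) : ℂ)) ∂ν) : μ = ν := by
  have : μ.map (MeasurableEquiv.toLp 2 (Fin n → ℝ)) = ν.map (MeasurableEquiv.toLp 2 (Fin n → ℝ)) := by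
    apply Measure.ext_of_charFun
    ext t
    rw [charFun_toLp, charFun_toLp]
    exact h _
  exact (MeasurableEquiv.map_measurableEquiv_injective _) this

theorem deconvX (n : ℕ)
    (μ ν : ℕ → Measure (Fin n → ℝ)) (hμ : ∀ n, IsProbabilityMeasure (μ n))
    (hν : ∀ n, IsProbabilityMeasure (ν n))
    (hcomm : ∀ i j, Measure.conv (μ i) (ν j) = Measure.conv (μ j) (ν i))
    (hne : ∀ t : Fin n → ℝ,
      ∫ x, Complex.exp (Complex.I * ((∑ k, t k * x k : ℝ) : ℂ)) ∂(ν 0) ≠ 0)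
    (hlim : ∀ t : Fin n → ℝ, Tendsto (fun i =>
      ∫ x, Complex.exp (Complex.I * ((∑ k, t k * x k : ℝ) : ℂ)) ∂(ν i)) atTop (𝓝 1)) :
    ∃ ρ : Measure (Fin n → ℝ), IsProbabilityMeasure ρ ∧ ∀ μ' ν' : Measure (Fin n → ℝ),
      IsFiniteMeasure μ' →
      IsFiniteMeasure ν' → Measure.conv μ' (ν 0) = Measure.conv (μ 0) ν' →
      μ' = Measure.conv ρ ν' := by
  let e := MeasurableEquiv.toLp 2 (Fin n → ℝ)
  have he : ∀ (μ ν : Measure (Fin n → ℝ)) [SFinite μ] [SFinite ν],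
      (Measure.conv μ ν).map e = Measure.conv (μ.map e) (ν.map e) := by
    intro μ ν _ _
    exact Measure.map_conv_addMonoidHom (WithLp.addEquiv 2 (Fin n → ℝ)).symm.toAddMonoidHom
      e.measurable
  have he' : ∀ (μ ν : Measure (EuclideanSpace ℝ (Fin n))) [SFinite μ] [SFinite ν],
      (Measure.conv μ ν).map e.symm = Measure.conv (μ.map e.symm) (ν.map e.symm) := by
    intro μ ν _ _
    exact Measure.map_conv_addMonoidHom (WithLp.addEquiv 2 (Fin n → ℝ)).toAddMonoidHom
      e.symm.measurable
  obtain ⟨ρ, hρ, H⟩ := deconv (fun i => (μ i).map e) (fun i => (ν i).map e)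
    (fun i => Measure.isProbabilityMeasure_map e.measurable.aemeasurable)
    (fun i => Measure.isProbabilityMeasure_map e.measurable.aemeasurable)
    (fun i j => by simp only [← he, hcomm i j])
    (fun t => by simp only [e, charFun_toLp]; exact hne _)
    (fun t => by simp only [e, charFun_toLp]; exact hlim _)
  refine ⟨ρ.map e.symm, Measure.isProbabilityMeasure_map e.symm.measurable.aemeasurable,
    fun μ' ν' _ _ h => ?_⟩
  have h1 := H (μ'.map e) (ν'.map e) inferInstance inferInstance (by simp only [← he, h])
  have h2 := congrArg (Measure.map e.symm) h1
  rw [he'] at h2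
  simpa using h2

theorem real_inj (n : ℕ) (r : (Fin n → ℝ) → ℝ) (hr : Integrable r)
    (h : ∀ p : Fin n → ℝ, ∫ x, Complex.exp (Complex.I * ((∑ k, p k * x k : ℝ) : ℂ)) * (r x : ℂ) = 0) :
    r =ᵐ[volume] 0 := by
  have hf1 : ∫⁻ x, ENNReal.ofReal (r x) ≠ ∞ := by
    exact ((lintegral_mono (fun x => Real.ofReal_le_enorm _)).trans_lt hr.2).ne
  have hf2 : ∫⁻ x, ENNReal.ofReal (-r x) ≠ ∞ := by
    exact ((lintegral_mono (fun x => Real.ofReal_le_enorm _)).trans_lt hr.neg.2).ne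
  have m1 : AEMeasurable (fun x => ENNReal.ofReal (r x)) := hr.1.aemeasurable.ennreal_ofReal
  have m2 : AEMeasurable (fun x => ENNReal.ofReal (-r x)) := hr.1.aemeasurable.neg.ennreal_ofReal
  have := isFiniteMeasure_withDensity hf1
  have := isFiniteMeasure_withDensity hf2
  have key : volume.withDensity (fun x => ENNReal.ofReal (r x))
      = volume.withDensity (fun x => ENNReal.ofReal (-r x)) := by
    apply ext_fourier
    intro p
    rw [integral_withDensity_eq_integral_toReal_smul₀ m1 (by simp),
      integral_withDensity_eq_integral_toReal_smul₀ m2 (by simp), ← sub_eq_zero, ← integral_sub]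
    · rw [← h p]
      congr 1; ext x
      simp only [ENNReal.toReal_ofReal', Complex.real_smul, ← sub_mul, ← Complex.ofReal_sub]
      rw [mul_comm]
      congr 2
      rcases le_total (r x) 0 with h | h
      · rw [max_eq_right h, max_eq_left (by linarith)]; ring
      · rw [max_eq_left h, max_eq_right (by linarith)]; ring
    · simp only [ENNReal.toReal_ofReal', Complex.real_smul]
      refine hr.pos_part.ofReal.mul_bdd (c := 1) (Continuous.aestronglyMeasurable (by fun_prop)) (ae_of_all _ fun x => ?_)
      rw [mul_comm, Complex.norm_exp_ofReal_mul_I]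
    · simp only [ENNReal.toReal_ofReal', Complex.real_smul]
      refine hr.neg_part.ofReal.mul_bdd (c := 1) (Continuous.aestronglyMeasurable (by fun_prop)) (ae_of_all _ fun x => ?_)
      rw [mul_comm, Complex.norm_exp_ofReal_mul_I]
  rw [withDensity_eq_iff m1 m2 hf1] at key
  filter_upwards [key] with x hx
  have := congrArg ENNReal.toReal hx
  simp only [ENNReal.toReal_ofReal'] at this
  rcases le_total (r x) 0 with h | h
  · rw [max_eq_right h, max_eq_left (by linarith)] at this; simp; linarith
  · rw [max_eq_left h, max_eq_right (by linarith)] at this; simpa using this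

theorem fourier_inj (n : ℕ) (f : (Fin n → ℝ) → ℂ) (hf : Integrable f)
    (h : ∀ p : Fin n → ℝ, ∫ x, Complex.exp (Complex.I * ((∑ k, p k * x k : ℝ) : ℂ)) * f x = 0) :
    f =ᵐ[volume] 0 := by
  have hi : ∀ (p : Fin n → ℝ) (g : (Fin n → ℝ) → ℂ), Integrable g → Integrable
      (fun x => Complex.exp (Complex.I * ((∑ k, p k * x k : ℝ) : ℂ)) * g x) := by
    intro p g hg
    refine hg.bdd_mul (c := 1) (Continuous.aestronglyMeasurable (by fun_prop)) (ae_of_all _ fun x => ?_)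
    rw [mul_comm, Complex.norm_exp_ofReal_mul_I]
  have hfc : Integrable (fun x => conj (f x)) := by
    simpa using (Complex.conjCLE.toContinuousLinearMap.integrable_comp hf)
  have h' : ∀ p : Fin n → ℝ, ∫ x, Complex.exp (Complex.I * ((∑ k, p k * x k : ℝ) : ℂ)) * conj (f x) = 0 := by
    intro p
    have := congrArg conj (h (-p))
    rw [← integral_conj] at this
    simp only [map_mul, ← Complex.exp_conj, map_zero] at this
    rw [← this]
    congr 1; ext x
    congr 2
    simp
  have hre : (fun x => (f x).re) =ᵐ[volume] 0 := by
    refine real_inj n (fun x => (f x).re) hf.re ?_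
    intro p
    have : ∀ x, Complex.exp (Complex.I * ((∑ k, p k * x k : ℝ) : ℂ)) * ((f x).re : ℂ) =
      (1/2) * (Complex.exp (Complex.I * ((∑ k, p k * x k : ℝ) : ℂ)) * f x
       + Complex.exp (Complex.I * ((∑ k, p k * x k : ℝ) : ℂ)) * conj (f x)) := by
      intro x
      rw [Complex.re_eq_add_conj]; ring
    simp_rw [this]
    rw [integral_const_mul, integral_add (hi p f hf) (hi p _ hfc), h, h']; simp
  have him : (fun x => (f x).im) =ᵐ[volume] 0 := by
    refine real_inj n (fun x => (f x).im) hf.im ?_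
    intro p
    have : ∀ x, Complex.exp (Complex.I * ((∑ k, p k * x k : ℝ) : ℂ)) * ((f x).im : ℂ) =
      (1/(2 * Complex.I)) * (Complex.exp (Complex.I * ((∑ k, p k * x k : ℝ) : ℂ)) * f x
       - Complex.exp (Complex.I * ((∑ k, p k * x k : ℝ) : ℂ)) * conj (f x)) := by
      intro x
      rw [Complex.im_eq_sub_conj]; ring
    simp_rw [this]
    rw [integral_const_mul, integral_sub (hi p f hf) (hi p _ hfc), h, h']; simp
  filter_upwards [hre, him] with x h1 h2
  exact Complex.ext h1 h2

/-- the density measure of a wave function -/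
noncomputable def den {n : ℕ} (φ : L2Rn n) : Measure (Fin n → ℝ) :=
  volume.withDensity (fun x => ‖φ x‖ₑ ^ 2)

theorem meas_den {n : ℕ} (φ : L2Rn n) : Measurable (fun x => ‖φ x‖ₑ ^ 2) :=
  (Lp.stronglyMeasurable φ).measurable.enorm.pow_const 2

theorem lintegral_sq {n : ℕ} (φ : L2Rn n) : ∫⁻ x, ‖φ x‖ₑ ^ 2 = ENNReal.ofReal (‖φ‖ ^ 2) := by
  have h := L2.inner_def (𝕜 := ℂ) φ φ
  have h1 : ‖φ‖ ^ 2 = ∫ x, ‖φ x‖ ^ 2 := by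
    rw [inner_self_eq_norm_sq_to_K] at h
    simp_rw [inner_self_eq_norm_sq_to_K] at h
    have h2 : ((‖φ‖ ^ 2 : ℝ) : ℂ) = ((∫ x, ‖φ x‖ ^ 2 : ℝ) : ℂ) := by
      rw [← integral_complex_ofReal]; push_cast; exact h
    exact_mod_cast h2
  rw [h1, ofReal_integral_eq_lintegral_ofReal]
  · congr 1; ext x
    rw [ENNReal.ofReal_pow (norm_nonneg _), ofReal_norm]
  · exact (memLp_two_iff_integrable_sq_norm (Lp.aestronglyMeasurable φ)).1 (Lp.memLp φ)
  · exact ae_of_all _ fun x => by positivity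

theorem den_univ {n : ℕ} (φ : L2Rn n) : den φ univ = ENNReal.ofReal (‖φ‖ ^ 2) := by
  rw [den, withDensity_apply _ MeasurableSet.univ, Measure.restrict_univ, lintegral_sq]

instance {n : ℕ} (φ : L2Rn n) : IsFiniteMeasure (den φ) := ⟨by rw [den_univ]; simp⟩

/-- Gaussian wave functions -/
noncomputable def gfun (n : ℕ) (a b : ℝ) (x : Fin n → ℝ) : ℂ :=
  ((a * Real.exp (-(b / 2) * ∑ i, x i ^ 2) : ℝ) : ℂ)

theorem gfun_sq (n : ℕ) (a b : ℝ) (x : Fin n → ℝ) :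
    ((‖gfun n a b x‖ ^ 2 : ℝ) : ℂ) = (a : ℂ) ^ 2 * Complex.exp (-(b : ℂ) * ∑ i, (x i : ℂ) ^ 2) := by
  rw [gfun, Complex.norm_real, Real.norm_eq_abs, sq_abs, mul_pow, ← Real.exp_nat_mul]
  push_cast
  congr 2
  ring

theorem gfun_int (n : ℕ) (a b : ℝ) (hb : 0 < b) (t : Fin n → ℝ) :
    ∫ x, ((‖gfun n a b x‖ ^ 2 : ℝ) : ℂ) * Complex.exp (Complex.I * ((∑ k, t k * x k : ℝ) : ℂ))
      = (a : ℂ) ^ 2 * ((Real.pi / b) ^ (n / 2 : ℂ) *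
        Complex.exp (- (∑ i, (t i : ℂ) ^ 2) / (4 * b))) := by
  have h := GaussianFourier.integral_cexp_neg_mul_sum_add (b := (b : ℂ)) (by simpa using hb)
    (fun i => Complex.I * t i)
  have h2 : ∑ i, (Complex.I * (t i : ℂ)) ^ 2 = - ∑ i, (t i : ℂ) ^ 2 := by
    simp [mul_pow]
  rw [h2, Fintype.card_fin] at h
  rw [← h, ← integral_const_mul]
  congr 1; ext x
  rw [gfun_sq, Complex.exp_add, mul_assoc]
  congr 3
  push_cast
  rw [Finset.mul_sum]
  congr 1; ext i; ring

theorem gfun_memLp (n : ℕ) (a b : ℝ) (hb : 0 < b) :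
    MemLp (gfun n a b) 2 (volume : Measure (Fin n → ℝ)) := by
  have hc : Continuous (gfun n a b) := by unfold gfun; fun_prop
  rw [memLp_two_iff_integrable_sq_norm hc.aestronglyMeasurable]
  by_cases ha : a = 0
  · simp [gfun, ha]
  have h := gfun_int n a b hb 0
  simp only [Pi.zero_apply, zero_mul, Finset.sum_const_zero, Complex.ofReal_zero, mul_zero,
    Complex.exp_zero, mul_one] at h
  have h3 : Integrable (fun x => ((‖gfun n a b x‖ ^ 2 : ℝ) : ℂ)) := by
    by_contra hni
    rw [integral_undef hni] at h
    have hpb : (Real.pi / b : ℂ) ≠ 0 := by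
      have := Real.pi_pos.ne'
      have := hb.ne'
      exact div_ne_zero (by exact_mod_cast ‹Real.pi ≠ 0›) (by exact_mod_cast this)
    have h4 : (Real.pi / b : ℂ) ^ (n / 2 : ℂ) ≠ 0 := by
      rw [Complex.cpow_def_of_ne_zero hpb]; exact Complex.exp_ne_zero _
    have h5 : (a : ℂ) ^ 2 ≠ 0 := pow_ne_zero _ (by exact_mod_cast ha)
    have : (a : ℂ) ^ 2 * (Real.pi / b : ℂ) ^ (n / 2 : ℂ) = 0 := by simpa using h.symm
    exact (mul_ne_zero h5 h4) this
  exact h3.re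

theorem exists_norm_const (n : ℕ) (b : ℝ) (hb : 0 < b) :
    ∃ a : ℝ, a ≠ 0 ∧ (a : ℂ) ^ 2 * ((Real.pi / b : ℂ) ^ (n / 2 : ℂ)) = 1 := by
  have hp : 0 < Real.pi / b := div_pos Real.pi_pos hb
  have hp2 : 0 < (Real.pi / b) ^ (n / 2 : ℝ) := Real.rpow_pos_of_pos hp _
  refine ⟨Real.sqrt ((Real.pi / b) ^ (n / 2 : ℝ))⁻¹, by positivity, ?_⟩
  have h1 : (Real.pi / b : ℂ) ^ (n / 2 : ℂ) = (((Real.pi / b) ^ (n / 2 : ℝ) : ℝ) : ℂ) := by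
    rw [Complex.ofReal_cpow hp.le]; push_cast; rfl
  rw [h1, ← Complex.ofReal_pow, Real.sq_sqrt (by positivity), ← Complex.ofReal_mul,
    inv_mul_cancel₀ hp2.ne', Complex.ofReal_one]

theorem gauss_exists (n : ℕ) (b : ℝ) (hb : 0 < b) :
    ∃ φ : L2Rn n, (∀ᵐ x, φ x ≠ 0) ∧
      ∀ t : Fin n → ℝ, ∫ x, Complex.exp (Complex.I * ((∑ k, t k * x k : ℝ) : ℂ)) ∂(den φ)
        = Complex.exp (- (∑ i, (t i : ℂ) ^ 2) / (4 * b)) := by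
  obtain ⟨a, ha, h⟩ := exists_norm_const n b hb
  have hae := (gfun_memLp n a b hb).coeFn_toLp
  refine ⟨(gfun_memLp n a b hb).toLp, ?_, fun t => ?_⟩
  · filter_upwards [hae] with x hx
    rw [hx, gfun]
    exact_mod_cast mul_ne_zero ha (Real.exp_ne_zero _)
  · rw [den, integral_withDensity_eq_integral_toReal_smul (meas_den _) (by simp)]
    rw [show Complex.exp (- (∑ i, (t i : ℂ) ^ 2) / (4 * b)) = (a : ℂ) ^ 2 * ((Real.pi / b : ℂ) ^ (n / 2 : ℂ) *
        Complex.exp (- (∑ i, (t i : ℂ) ^ 2) / (4 * b))) by rw [← mul_assoc, h, one_mul],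
      ← gfun_int n a b hb t]
    apply integral_congr_ae
    filter_upwards [hae] with x hx
    rw [hx]
    simp

theorem integrable_conj_mul {n : ℕ} (φ ψ : L2Rn n) :
    Integrable (fun x => conj (φ x) * ψ x) := by
  have := L2.integrable_inner (𝕜 := ℂ) φ ψ
  refine this.congr (ae_of_all _ fun x => ?_)
  simp [RCLike.inner_apply, mul_comm]

theorem inner_eq {n : ℕ} (φ ψ : L2Rn n) : ⟪φ, ψ⟫ = ∫ x, conj (φ x) * ψ x := by
  rw [L2.inner_def]
  congr 1; ext x
  simp [RCLike.inner_apply, mul_comm]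

theorem boost_comm (n : ℕ)
    (V : (Fin n → ℝ) → (L2Rn n ≃ₗᵢ[ℂ] L2Rn n))
    (hV : ∀ p : Fin n → ℝ, ∀ φ : L2Rn n,
      (V p φ : (Fin n → ℝ) → ℂ) =ᵐ[volume]
        fun x => Complex.exp (Complex.I * (∑ k, p k * x k)) * φ x)
    (T : L2Rn n →L[ℂ] L2Rn n) (hT : T.IsPositive)
    (hinv : ∀ p, ∀ φ ψ : L2Rn n, ⟪V p φ, T (V p ψ)⟫ = ⟪φ, T ψ⟫) (φ ψ : L2Rn n) :
    ∀ᵐ x, conj (T φ x) * ψ x = conj (φ x) * T ψ x := by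
  have key : (fun x => conj (T φ x) * ψ x - conj (φ x) * T ψ x) =ᵐ[volume] 0 := by
    refine fourier_inj n (fun x => conj (T φ x) * ψ x - conj (φ x) * T ψ x) ((integrable_conj_mul _ _).sub (integrable_conj_mul _ _)) ?_
    intro p
    have h1 : ⟪T φ, V p ψ⟫ = ⟪φ, V p (T ψ)⟫ := by
      have hs : ⟪T φ, V p ψ⟫ = ⟪φ, T (V p ψ)⟫ := hT.isSymmetric _ _
      rw [hs]
      have hi := hinv p ((V p).symm φ) ψ
      rw [LinearIsometryEquiv.apply_symm_apply] at hi
      rw [hi, ← (V p).inner_map_map, LinearIsometryEquiv.apply_symm_apply]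
    have h2 : ∀ α β : L2Rn n, ⟪α, V p β⟫ = ∫ x, Complex.exp (Complex.I * ((∑ k, p k * x k : ℝ) : ℂ)) *
        (conj (α x) * β x) := by
      intro α β
      rw [inner_eq]
      apply integral_congr_ae
      filter_upwards [hV p β] with x hx
      rw [hx]; push_cast; ring
    have hi : ∀ (α β : L2Rn n), Integrable
      (fun x => Complex.exp (Complex.I * ((∑ k, p k * x k : ℝ) : ℂ)) * (conj (α x) * β x)) := by
      intro α β
      refine (integrable_conj_mul α β).bdd_mul (c := 1)
        (Continuous.aestronglyMeasurable (by fun_prop)) (ae_of_all _ fun x => ?_)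
      rw [mul_comm, Complex.norm_exp_ofReal_mul_I]
    simp_rw [mul_sub]
    rw [integral_sub (hi _ _) (hi _ _), ← h2, ← h2, h1, sub_self]
  filter_upwards [key] with x hx
  exact sub_eq_zero.1 hx

/-- cut-off of an `L²` function -/
theorem exists_cut {n : ℕ} (φ : L2Rn n) (A : Set (Fin n → ℝ)) (hA : MeasurableSet A) :
    ∃ ψ : L2Rn n, (ψ : (Fin n → ℝ) → ℂ) =ᵐ[volume] A.indicator φ :=
  ⟨((Lp.memLp φ).indicator hA).toLp, MemLp.coeFn_toLp _⟩

theorem mult_exists (n : ℕ)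
    (V : (Fin n → ℝ) → (L2Rn n ≃ₗᵢ[ℂ] L2Rn n))
    (hV : ∀ p : Fin n → ℝ, ∀ φ : L2Rn n,
      (V p φ : (Fin n → ℝ) → ℂ) =ᵐ[volume]
        fun x => Complex.exp (Complex.I * (∑ k, p k * x k)) * φ x)
    (T : L2Rn n →L[ℂ] L2Rn n) (hT : T.IsPositive)
    (hinv : ∀ p, ∀ φ ψ : L2Rn n, ⟪V p φ, T (V p ψ)⟫ = ⟪φ, T ψ⟫) :
    ∃ m : (Fin n → ℝ) → NNReal, Measurable m ∧
      ∀ ψ : L2Rn n, ∀ᵐ x, T ψ x = ((m x : ℝ) : ℂ) * ψ x := by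
  have hcomm := boost_comm n V hV T hT hinv
  obtain ⟨g, hg, -⟩ := gauss_exists n 1 one_pos
  let w : (Fin n → ℝ) → ℂ := fun x => T g x / g x
  have hw : Measurable w := (Lp.stronglyMeasurable _).measurable.div (Lp.stronglyMeasurable _).measurable
  have hwT : ∀ ψ : L2Rn n, ∀ᵐ x, T ψ x = w x * ψ x := by
    intro ψ
    filter_upwards [hcomm g ψ, hcomm g g, hg] with x h1 h2 h3
    have h3' : conj (g x) ≠ 0 := by simpa using h3
    have : conj (T g x) = conj (g x) * w x := by
      simp only [w]
      field_simp
      exact h2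
    rw [this] at h1
    have := mul_left_cancel₀ h3' ((mul_assoc _ _ _).symm.trans h1)
    exact this.symm
  have hreal : ∀ᵐ x, (w x).im = 0 := by
    filter_upwards [hcomm g g, hg] with x h2 h3
    have h3' : conj (g x) ≠ 0 := by simpa using h3
    have : conj (w x) = w x := by
      simp only [w, map_div₀]
      field_simp
      exact h2
    exact Complex.conj_eq_iff_im.1 this
  have hint : Integrable (fun x => (w x).re * ‖g x‖ ^ 2) := by
    refine (integrable_conj_mul g (T g)).re.congr ?_
    filter_upwards [hwT g] with x hx
    rw [hx, mul_left_comm, ← Complex.normSq_eq_conj_mul_self, Complex.normSq_eq_norm_sq]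
    exact Complex.re_mul_ofReal _ _
  have hpos : ∀ᵐ x, 0 ≤ (w x).re * ‖g x‖ ^ 2 := by
    refine ae_nonneg_of_forall_setIntegral_nonneg hint (fun A hA _ => ?_)
    obtain ⟨ψ, hψ⟩ := exists_cut g A hA
    have h0 : 0 ≤ (⟪ψ, T ψ⟫).re := by
      have := (hT.inner_nonneg_right ψ)
      exact (Complex.nonneg_iff.1 this).1
    rw [inner_eq] at h0
    have h1 : (∫ x, conj (ψ x) * T ψ x).re = ∫ x, (conj (ψ x) * T ψ x).re :=
      (integral_re (integrable_conj_mul ψ (T ψ))).symm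
    rw [h1] at h0
    rw [← integral_indicator hA]
    refine h0.trans_eq (integral_congr_ae ?_)
    filter_upwards [hwT ψ, hψ] with x hx hx2
    rw [hx, mul_left_comm, ← Complex.normSq_eq_conj_mul_self, Complex.normSq_eq_norm_sq, hx2]
    by_cases hxA : x ∈ A
    · simp only [Set.indicator_of_mem hxA]
      exact Complex.re_mul_ofReal _ _
    · simp [Set.indicator_of_notMem hxA]
  refine ⟨fun x => (w x).re.toNNReal, (Complex.measurable_re.comp hw).real_toNNReal, fun ψ => ?_⟩
  filter_upwards [hwT ψ, hreal, hpos, hg] with x h1 h2 h3 h4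
  have h5 : 0 < ‖g x‖ ^ 2 := by positivity
  have h6 : 0 ≤ (w x).re := nonneg_of_mul_nonneg_left h3 h5
  rw [h1, Real.coe_toNNReal _ h6]
  congr 1
  exact Complex.ext (by simp) (by simp [h2])

theorem povm_empty {n : ℕ} (M : POVM (Fin n → ℝ) (L2Rn n)) (φ : L2Rn n) :
    ⟪φ, M.toFun ∅ φ⟫ = 0 := by
  have h := M.m_iUnion (fun _ => ∅) (fun _ => MeasurableSet.empty)
    (fun i j _ => by simp [Function.onFun]) φ φ
  exact (summable_const_iff _).1 h.summable

theorem povm_nonneg {n : ℕ} (M : POVM (Fin n → ℝ) (L2Rn n)) (φ : L2Rn n)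
    {B : Set (Fin n → ℝ)} (hB : MeasurableSet B) : 0 ≤ (⟪φ, M.toFun B φ⟫).re :=
  (Complex.nonneg_iff.1 ((M.isPositive B hB).inner_nonneg_right φ)).1

/-- the probability distribution of `M` in the state `φ` -/
noncomputable def pm {n : ℕ} (M : POVM (Fin n → ℝ) (L2Rn n)) (φ : L2Rn n) :
    Measure (Fin n → ℝ) :=
  Measure.ofMeasurable (fun B _ => ENNReal.ofReal (⟪φ, M.toFun B φ⟫).re)
    (by rw [povm_empty]; simp)
    (by
      intro B hB hd
      have h := Complex.hasSum_re (M.m_iUnion B hB hd φ φ)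
      rw [← h.tsum_eq]
      exact ENNReal.ofReal_tsum_of_nonneg (fun i => povm_nonneg M φ (hB i)) h.summable)

theorem pm_apply {n : ℕ} (M : POVM (Fin n → ℝ) (L2Rn n)) (φ : L2Rn n)
    {B : Set (Fin n → ℝ)} (hB : MeasurableSet B) :
    pm M φ B = ENNReal.ofReal (⟪φ, M.toFun B φ⟫).re :=
  Measure.ofMeasurable_apply B hB

theorem pm_univ {n : ℕ} (M : POVM (Fin n → ℝ) (L2Rn n)) (φ : L2Rn n) :
    pm M φ univ = den φ univ := by
  rw [pm_apply M φ MeasurableSet.univ, den_univ, M.normalized]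
  congr 1
  have : ⟪φ, φ⟫ = ((‖φ‖ ^ 2 : ℝ) : ℂ) := by
    rw [inner_self_eq_norm_sq_to_K]; push_cast; rfl
  rw [one_apply_eq_self, this, Complex.ofReal_re]

instance {n : ℕ} (M : POVM (Fin n → ℝ) (L2Rn n)) (φ : L2Rn n) : IsFiniteMeasure (pm M φ) :=
  ⟨by rw [pm_univ]; exact measure_lt_top _ _⟩

theorem pm_eq {n : ℕ} (M : POVM (Fin n → ℝ) (L2Rn n)) (φ : L2Rn n)
    {B : Set (Fin n → ℝ)} (hB : MeasurableSet B) (m : (Fin n → ℝ) → NNReal)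
    (hm : ∀ ψ : L2Rn n, ∀ᵐ x, M.toFun B ψ x = ((m x : ℝ) : ℂ) * ψ x) :
    pm M φ B = ∫⁻ x, ‖φ x‖ₑ ^ 2 * m x := by
  rw [pm_apply M φ hB, inner_eq]
  have h1 : (∫ x, conj (φ x) * M.toFun B φ x).re = ∫ x, (conj (φ x) * M.toFun B φ x).re :=
    (integral_re (integrable_conj_mul φ (M.toFun B φ))).symm
  have h2 : ∀ᵐ x, (conj (φ x) * M.toFun B φ x).re = ‖φ x‖ ^ 2 * (m x : ℝ) := by
    filter_upwards [hm φ] with x hx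
    rw [hx, mul_left_comm, ← Complex.normSq_eq_conj_mul_self, Complex.normSq_eq_norm_sq,
      ← Complex.ofReal_mul, Complex.ofReal_re, mul_comm]
  rw [h1, ofReal_integral_eq_lintegral_ofReal]
  · apply lintegral_congr_ae
    filter_upwards [h2] with x hx
    rw [hx, ENNReal.ofReal_mul (by positivity), ENNReal.ofReal_pow (norm_nonneg _),
      ofReal_norm, ENNReal.ofReal_coe_nnreal]
  · exact (integrable_conj_mul φ (M.toFun B φ)).re
  · filter_upwards [h2] with x hx
    rw [hx]; simp only [Pi.zero_apply]; positivity

theorem conv_den {n : ℕ} (μ : Measure (Fin n → ℝ)) [IsFiniteMeasure μ] (ψ : L2Rn n)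
    {B : Set (Fin n → ℝ)} (hB : MeasurableSet B) :
    Measure.conv μ (den ψ) B = ∫⁻ q, ‖ψ q‖ₑ ^ 2 * μ ((fun x => x + q) ⁻¹' B) := by
  rw [Measure.conv_comm, ← lintegral_indicator_one hB,
    Measure.lintegral_conv (measurable_one.indicator hB), den,
    lintegral_withDensity_eq_lintegral_mul_non_measurable _ (meas_den ψ) (by simp)]
  congr 1; ext q
  have hB' : MeasurableSet ((fun x => x + q) ⁻¹' B) := (measurable_add_const q) hB
  simp only [Pi.mul_apply]
  congr 1
  rw [← lintegral_indicator_one hB']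
  congr 1; ext y
  rw [add_comm q y]
  rfl

theorem pm_conv {n : ℕ} (U : (Fin n → ℝ) → (L2Rn n ≃ₗᵢ[ℂ] L2Rn n))
    (hU : ∀ q : Fin n → ℝ, ∀ φ : L2Rn n,
      (U q φ : (Fin n → ℝ) → ℂ) =ᵐ[volume] fun x => φ (x - q))
    (M : POVM (Fin n → ℝ) (L2Rn n)) (hMcov : TransCovariant n U M)
    {B : Set (Fin n → ℝ)} (hB : MeasurableSet B) (m : (Fin n → ℝ) → NNReal) (hmm : Measurable m)
    (hm : ∀ ψ : L2Rn n, ∀ᵐ x, M.toFun B ψ x = ((m x : ℝ) : ℂ) * ψ x) (φ ψ : L2Rn n) :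
    Measure.conv (pm M φ) (den ψ) B
      = ∫⁻ q, ∫⁻ x, ‖ψ q‖ₑ ^ 2 * (‖φ x‖ₑ ^ 2 * m (x + q)) := by
  have h1 : ∀ q : Fin n → ℝ, pm M φ ((fun x => x + q) ⁻¹' B) = ∫⁻ x, ‖φ x‖ₑ ^ 2 * m (x + q) := by
    intro q
    have hB' : MeasurableSet ((fun x => x + q) ⁻¹' B) := (measurable_add_const q) hB
    have h2 : pm M φ ((fun x => x + q) ⁻¹' B) = pm M (U q φ) B := by
      rw [pm_apply M φ hB', pm_apply M _ hB, ← hMcov q _ hB',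
        Set.image_preimage_eq _ (add_right_surjective q)]
    rw [h2, pm_eq M _ hB m hm, ← lintegral_add_right_eq_self _ q]
    apply lintegral_congr_ae
    have := (measurePreserving_add_right (volume : Measure (Fin n → ℝ)) q).quasiMeasurePreserving.ae (hU q φ)
    filter_upwards [this] with x hx
    rw [hx, add_sub_cancel_right]
  rw [conv_den _ _ hB]
  congr 1; ext q
  rw [h1, lintegral_const_mul]
  exact (meas_den φ).mul (hmm.comp (measurable_add_const q)).coe_nnreal_ennreal

theorem pm_comm {n : ℕ} (U : (Fin n → ℝ) → (L2Rn n ≃ₗᵢ[ℂ] L2Rn n))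
    (hU : ∀ q : Fin n → ℝ, ∀ φ : L2Rn n,
      (U q φ : (Fin n → ℝ) → ℂ) =ᵐ[volume] fun x => φ (x - q))
    (M : POVM (Fin n → ℝ) (L2Rn n)) (hMcov : TransCovariant n U M)
    (hmult : ∀ B : Set (Fin n → ℝ), MeasurableSet B → ∃ m : (Fin n → ℝ) → NNReal, Measurable m ∧
      ∀ ψ : L2Rn n, ∀ᵐ x, M.toFun B ψ x = ((m x : ℝ) : ℂ) * ψ x) (φ ψ : L2Rn n) :
    Measure.conv (pm M φ) (den ψ) = Measure.conv (pm M ψ) (den φ) := by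
  ext B hB
  obtain ⟨m, hmm, hm⟩ := hmult B hB
  rw [pm_conv U hU M hMcov hB m hmm hm, pm_conv U hU M hMcov hB m hmm hm, lintegral_lintegral_swap]
  · congr 1; ext x
    congr 1; ext y
    rw [add_comm x y]
    ring
  · refine Measurable.aemeasurable ?_
    have h1 : Measurable (fun p : (Fin n → ℝ) × (Fin n → ℝ) => ‖ψ p.1‖ₑ ^ 2) :=
      (meas_den ψ).comp measurable_fst
    have h2 : Measurable (fun p : (Fin n → ℝ) × (Fin n → ℝ) => ‖φ p.2‖ₑ ^ 2) :=
      (meas_den φ).comp measurable_snd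
    have h3 : Measurable (fun p : (Fin n → ℝ) × (Fin n → ℝ) =>
        ((m (p.2 + p.1) : NNReal) : ℝ≥0∞)) :=
      (hmm.comp (measurable_snd.add measurable_fst)).coe_nnreal_ennreal
    exact h1.mul (h2.mul h3)

theorem rho_exists {n : ℕ} (U : (Fin n → ℝ) → (L2Rn n ≃ₗᵢ[ℂ] L2Rn n))
    (hU : ∀ q : Fin n → ℝ, ∀ φ : L2Rn n,
      (U q φ : (Fin n → ℝ) → ℂ) =ᵐ[volume] fun x => φ (x - q))
    (M : POVM (Fin n → ℝ) (L2Rn n)) (hMcov : TransCovariant n U M)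
    (hmult : ∀ B : Set (Fin n → ℝ), MeasurableSet B → ∃ m : (Fin n → ℝ) → NNReal, Measurable m ∧
      ∀ ψ : L2Rn n, ∀ᵐ x, M.toFun B ψ x = ((m x : ℝ) : ℂ) * ψ x) :
    ∃ ρ : Measure (Fin n → ℝ), IsProbabilityMeasure ρ ∧
      ∀ φ : L2Rn n, pm M φ = Measure.conv ρ (den φ) := by
  choose g hg0 hg using fun i : ℕ => gauss_exists n (i + 1) (by positivity)
  have hcomm := pm_comm U hU M hMcov hmult
  have hp : ∀ i, IsProbabilityMeasure (den (g i)) := by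
    intro i
    have := hg i 0
    simp only [Pi.zero_apply, zero_mul, Finset.sum_const_zero, Complex.ofReal_zero, mul_zero,
      Complex.exp_zero, integral_const, ne_eq, OfNat.ofNat_ne_zero, not_false_eq_true, zero_pow,
      neg_zero, zero_div, Complex.real_smul, mul_one] at this
    have h1 : (den (g i)).real univ = 1 := by exact_mod_cast this
    rw [measureReal_def] at h1
    exact ⟨(ENNReal.toReal_eq_one_iff _).1 h1⟩
  obtain ⟨ρ, hρ, H⟩ := deconvX n (fun i => pm M (g i)) (fun i => den (g i))
    (fun i => ⟨by rw [pm_univ]; exact (hp i).measure_univ⟩) hp (fun i j => hcomm _ _)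
    (fun t => by simp only [hg]; exact Complex.exp_ne_zero _)
    (fun t => by
      simp only [hg]
      rw [← Complex.exp_zero]
      refine (Complex.continuous_exp.tendsto 0).comp ?_
      have h1 : Tendsto (fun i : ℕ => ((1 / ((i : ℝ) + 1) : ℝ) : ℂ)) atTop (𝓝 ((0 : ℝ) : ℂ)) :=
        (Complex.continuous_ofReal.tendsto 0).comp tendsto_one_div_add_atTop_nhds_zero_nat
      have h2 := h1.const_mul (-(∑ i, (t i : ℂ) ^ 2) / 4)
      simp only [Complex.ofReal_zero, mul_zero] at h2
      refine h2.congr (fun i => ?_)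
      push_cast
      field_simp)
  exact ⟨ρ, hρ, fun φ => H _ _ inferInstance inferInstance (hcomm _ _)⟩

theorem m_eq {n : ℕ} (M : POVM (Fin n → ℝ) (L2Rn n))
    (ρ : Measure (Fin n → ℝ)) [IsProbabilityMeasure ρ]
    (hρ : ∀ φ : L2Rn n, pm M φ = Measure.conv ρ (den φ))
    {B : Set (Fin n → ℝ)} (hB : MeasurableSet B) (m : (Fin n → ℝ) → NNReal) (hmm : Measurable m)
    (hm : ∀ ψ : L2Rn n, ∀ᵐ x, M.toFun B ψ x = ((m x : ℝ) : ℂ) * ψ x) :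
    ∀ᵐ y, (m y : ℝ≥0∞) = ρ ((fun x => x + y) ⁻¹' B) := by
  obtain ⟨g, hg, -⟩ := gauss_exists n 1 one_pos
  have hmeas : Measurable (fun y => ρ ((fun x => x + y) ⁻¹' B)) := by
    have hS : MeasurableSet {p : (Fin n → ℝ) × (Fin n → ℝ) | p.2 + p.1 ∈ B} :=
      (measurable_snd.add measurable_fst) hB
    exact measurable_measure_prodMk_left hS
  have key : (fun x => ‖g x‖ₑ ^ 2 * m x) =ᵐ[volume]
      (fun x => ‖g x‖ₑ ^ 2 * ρ ((fun z => z + x) ⁻¹' B)) := by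
    refine ae_eq_of_forall_setLIntegral_eq_of_sigmaFinite
      ((meas_den g).mul hmm.coe_nnreal_ennreal) ((meas_den g).mul hmeas) (fun A hA _ => ?_)
    obtain ⟨ψ, hψ⟩ := exists_cut g A hA
    have h := congrArg (fun μ => μ B) (hρ ψ)
    simp only [conv_den ρ ψ hB, pm_eq M ψ hB m hm] at h
    have h1 : ∀ F : (Fin n → ℝ) → ℝ≥0∞, ∫⁻ x in A, ‖g x‖ₑ ^ 2 * F x = ∫⁻ x, ‖ψ x‖ₑ ^ 2 * F x := by
      intro F
      rw [← lintegral_indicator hA]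
      apply lintegral_congr_ae
      filter_upwards [hψ] with x hx
      rw [hx]
      by_cases hxA : x ∈ A <;> simp [hxA]
    rw [h1, h1, h]
  filter_upwards [key, hg] with x hx hx2
  exact (ENNReal.mul_right_inj (by simpa using hx2) (by simp)).1 hx

theorem final_eq {n : ℕ} (ρ : Measure (Fin n → ℝ)) [IsProbabilityMeasure ρ]
    {B : Set (Fin n → ℝ)} (hB : MeasurableSet B) (f : (Fin n → ℝ) → ℂ) (hf : Integrable f) :
    ∫ y, ((ρ.real ((fun x => x + y) ⁻¹' B) : ℝ) : ℂ) * f y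
      = ∫ x in B, (∫ q, f (x - q) ∂ρ) := by
  have hS : MeasurableSet {p : (Fin n → ℝ) × (Fin n → ℝ) | p.2 + p.1 ∈ B} :=
      (measurable_snd.add measurable_fst) hB
  -- `F (y, q) = 1_B (q + y) f y`
  let F : (Fin n → ℝ) × (Fin n → ℝ) → ℂ :=
    {p : (Fin n → ℝ) × (Fin n → ℝ) | p.2 + p.1 ∈ B}.indicator (fun p => f p.1)
  have hF : Integrable F (volume.prod ρ) := (hf.comp_fst ρ).indicator hS
  have h1 : ∀ y, ((ρ.real ((fun x => x + y) ⁻¹' B) : ℝ) : ℂ) * f y = ∫ q, F (y, q) ∂ρ := by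
    intro y
    have hB' : MeasurableSet ((fun x => x + y) ⁻¹' B) := (measurable_add_const y) hB
    have : (fun q => F (y, q)) = ((fun x => x + y) ⁻¹' B).indicator (fun _ => f y) := by
      ext q; rfl
    rw [this, integral_indicator_const _ hB', Complex.real_smul]
  simp_rw [h1]
  rw [integral_integral_swap (f := fun y q => F (y, q)) hF]
  have h2 : ∀ q, ∫ y, F (y, q) = ∫ x, B.indicator (fun x => f (x - q)) x := by
    intro q
    rw [← integral_sub_right_eq_self _ q]
    congr 1; ext x
    have e : q + (x - q) = x := by abel
    by_cases hx : x ∈ B <;> simp only [F, Set.indicator, Set.mem_setOf_eq, e, hx]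
  simp_rw [h2]
  have hmp : MeasurePreserving (fun p : (Fin n → ℝ) × (Fin n → ℝ) => (p.1 - p.2, p.2))
      (volume.prod ρ) (volume.prod ρ) := by
    exact measurePreserving_sub_prod volume ρ
  have hG : Integrable (fun p : (Fin n → ℝ) × (Fin n → ℝ) => B.indicator (fun x => f (x - p.2)) p.1)
      (volume.prod ρ) := by
    have := hmp.integrable_comp_of_integrable hF
    refine this.congr (ae_of_all _ fun p => ?_)
    have e : p.2 + (p.1 - p.2) = p.1 := by abel
    by_cases hx : p.1 ∈ B <;>
      simp only [F, Function.comp_apply, Set.indicator, Set.mem_setOf_eq, e, hx]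
  rw [← integral_integral_swap (f := fun x q => B.indicator (fun x => f (x - q)) x) hG, ← integral_indicator hB]
  congr 1; ext x
  by_cases hx : x ∈ B <;> simp [hx]

theorem stmt4 (n : ℕ) (hn : 1 ≤ n)
    (U : (Fin n → ℝ) → (L2Rn n ≃ₗᵢ[ℂ] L2Rn n))
    (hU : ∀ q : Fin n → ℝ, ∀ φ : L2Rn n,
      (U q φ : (Fin n → ℝ) → ℂ) =ᵐ[volume] fun x => φ (x - q))
    (V : (Fin n → ℝ) → (L2Rn n ≃ₗᵢ[ℂ] L2Rn n))
    (hV : ∀ p : Fin n → ℝ, ∀ φ : L2Rn n,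
      (V p φ : (Fin n → ℝ) → ℂ) =ᵐ[volume]
        fun x => Complex.exp (Complex.I * (∑ k, p k * x k)) * φ x)
    (M : POVM (Fin n → ℝ) (L2Rn n))
    (hMcov : TransCovariant n U M) (hMinv : BoostInvariant n V M) :
    ∃ ρ : Measure (Fin n → ℝ), IsProbabilityMeasure ρ ∧
      ∀ B : Set (Fin n → ℝ), MeasurableSet B → ∀ φ ψ : L2Rn n,
        ⟪φ, M.toFun B ψ⟫
          = ∫ x in B, (∫ q, conj (φ (x - q)) * ψ (x - q) ∂ρ) := by
  have hmult : ∀ B, MeasurableSet B → ∃ m : (Fin n → ℝ) → NNReal, Measurable m ∧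
      ∀ ψ : L2Rn n, ∀ᵐ x, M.toFun B ψ x = ((m x : ℝ) : ℂ) * ψ x :=
    fun B hB => mult_exists n V hV (M.toFun B) (M.isPositive B hB)
      (fun p φ ψ => hMinv p B hB φ ψ)
  obtain ⟨ρ, hρ, H⟩ := rho_exists U hU M hMcov hmult
  refine ⟨ρ, hρ, fun B hB φ ψ => ?_⟩
  obtain ⟨m, hmm, hm⟩ := hmult B hB
  have hme := m_eq M ρ H hB m hmm hm
  rw [← final_eq ρ hB (fun x => conj (φ x) * ψ x) (integrable_conj_mul φ ψ), inner_eq]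
  apply integral_congr_ae
  filter_upwards [hm ψ, hme] with x hx hx2
  rw [hx, measureReal_def, ← hx2, ENNReal.coe_toReal]
  ring
end
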